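/- arXiv:1509.02376 — 2 statements merged into one kernel-verified Lean document; each statement's English description precedes it below -/
import Mathlib

section
/- Fix m ≥ 1 and λ_1 ≥ ⋯ ≥ λ_{m+1} in Γ. Suppose that for each 0 ≤ k ≤ m we have a partial flag V_{k,m} ⊆ V_{k,m−1} ⊆ ⋯ ⊆ V_{k,k+1} ⊆ V_{k,k} ⊆ R^n of vector subspaces satisfying Δ(V_{k,ℓ}, V_{k+1,ℓ}) ≥ λ_{k+1} − λ_{ℓ+1} for 0 ≤ k < ℓ ≤ m (in particular dim V_{k,ℓ} = dim V_{k+1,ℓ}). Let P_{k,ℓ} denote the orthogonal projection of R^n onto V_{k,ℓ}. Then v((1 − P_{0,0})P_{1,1}P_{2,2}⋯P_{m,m}) ≥ λ_1 − λ_{m+1}; and if moreover dim V_{1,1} = dim V_{0,0} (which implies V_{0,1} = V_{0,0}), then also v((P_{0,0} − P_{1,1})P_{2,2}P_{3,3}⋯P_{m,m}) ≥ λ_1 − λ_{m+1}. -/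
open FirstOrder Matrix Topology Set
open scoped Classical

noncomputable section

namespace LipStrat

/-- A real closed field: an ordered field in which every nonnegative element is a square and
every polynomial of odd degree has a root. -/
class IsRealClosed (R : Type*) [Field R] [LinearOrder R] [IsStrictOrderedRing R] : Prop where
  exists_sq : ∀ x : R, 0 ≤ x → ∃ y : R, y ^ 2 = x
  exists_root : ∀ p : Polynomial R, Odd p.natDegree → ∃ x : R, p.eval x = 0

variable {R : Type*} [Field R] [LinearOrder R] [IsStrictOrderedRing R] [IsRealClosed R]

theorem exists_enorm {ι : Type*} [Fintype ι] (x : ι → R) :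
    ∃ y : R, 0 ≤ y ∧ y ^ 2 = ∑ i, x i ^ 2 := by
  obtain ⟨y, hy⟩ := IsRealClosed.exists_sq (∑ i, x i ^ 2)
    (Finset.sum_nonneg fun i _ => sq_nonneg _)
  exact ⟨|y|, abs_nonneg y, by rwa [sq_abs]⟩

/-- The euclidean norm of a vector over a real closed field. -/
def enorm {ι : Type*} [Fintype ι] (x : ι → R) : R := (exists_enorm x).choose

/-- The distance from a point to a set: the infimum (if it exists) of euclidean distances. -/
def infDist {ι : Type*} [Fintype ι] (a : ι → R) (X : Set (ι → R)) : R :=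
  if h : ∃ r : R, IsGLB ((fun x => enorm (a - x)) '' X) r then h.choose else 0

/-- The operator norm of a matrix: the supremum (if it exists) of `‖M x‖` over `‖x‖ = 1`. -/
def opNorm {k l : ℕ} (M : Matrix (Fin k) (Fin l) R) : R :=
  if h : ∃ r : R, IsLUB ((fun x => enorm (M.mulVec x)) '' {x | enorm x = 1}) r then h.choose
  else 0

end LipStrat
section MT

open FirstOrder

namespace LipStrat

variable {R : Type*} [Field R] [LinearOrder R] [IsStrictOrderedRing R] [IsRealClosed R]
variable (L : FirstOrder.Language) [L.Structure R]

/-- The graph of a function `R^k → R^l`, as a subset of a finite cartesian power of `R`. -/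
def graphSet {k l : ℕ} (f : (Fin k → R) → Fin l → R) : Set ((Fin k ⊕ Fin l) → R) :=
  {v | f (v ∘ Sum.inl) = v ∘ Sum.inr}

/-- A function `R^k → R^l` is definable with parameters in `A` if its graph is. -/
def DefFun (A : Set R) {k l : ℕ} (f : (Fin k → R) → Fin l → R) : Prop :=
  Set.Definable A L (graphSet f)

/-- A scalar-valued function `R^k → R` is definable with parameters in `A` if its graph is. -/
def DefFun₁ (A : Set R) {k : ℕ} (f : (Fin k → R) → R) : Prop :=
  DefFun L A (fun x => fun _ : Fin 1 => f x)

variable [TopologicalSpace R] [OrderTopology R]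

/-- `R` (with the order topology) is o-minimal as an `L`-structure: every subset of `R`
definable with arbitrary parameters is a finite union of points and open intervals;
equivalently (in a dense linear order), its topological frontier is finite. -/
def IsOMinimal : Prop :=
  ∀ s : Set R, Set.Definable (Set.univ : Set R) L {v : Fin 1 → R | v 0 ∈ s} →
    (frontier s).Finite

/-- The language `L` expands the (ordered) ring language: the graphs of addition and
multiplication and the order relation are `∅`-definable. -/
structure ExpandsOrderedRing : Prop where
  add_def : Set.Definable (∅ : Set R) L {v : Fin 3 → R | v 0 + v 1 = v 2}
  mul_def : Set.Definable (∅ : Set R) L {v : Fin 3 → R | v 0 * v 1 = v 2}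
  lt_def : Set.Definable (∅ : Set R) L {v : Fin 2 → R | v 0 < v 1}

/-- `R` is power-bounded: every definable function `R → R` is eventually bounded in absolute
value by a definable endomorphism of the multiplicative group `R^×` (a "power function"). -/
def IsPowerBounded : Prop :=
  ∀ f : R → R, DefFun₁ L (Set.univ : Set R) (fun v : Fin 1 → R => f (v 0)) →
    ∃ g : R → R, DefFun₁ L (Set.univ : Set R) (fun v : Fin 1 → R => g (v 0)) ∧
      (∀ x y : R, x ≠ 0 → y ≠ 0 → g (x * y) = g x * g y) ∧
      (∀ x : R, x ≠ 0 → g x ≠ 0) ∧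
      ∃ x₀ : R, ∀ x : R, x₀ ≤ x → |f x| ≤ g x

/-- The o-minimal dimension of a subset of `R^n`: the largest `d` such that some projection
to `d` coordinates has nonempty interior. -/
def odim {n : ℕ} (s : Set (Fin n → R)) : ℕ :=
  sSup {d | ∃ f : Fin d → Fin n, Function.Injective f ∧
    (interior ((fun x : Fin n → R => x ∘ f) '' s)).Nonempty}

end LipStrat

end MT
section Calc

namespace LipStrat

open Matrix

variable {R : Type*} [Field R] [LinearOrder R] [IsStrictOrderedRing R] [IsRealClosed R]

/-- `f` has (total) derivative given by the matrix `J` at the point `a`. -/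
def HasDerivAtPt {k l : ℕ} (f : (Fin k → R) → Fin l → R) (J : Fin l → Fin k → R)
    (a : Fin k → R) : Prop :=
  ∀ ε : R, 0 < ε → ∃ δ : R, 0 < δ ∧ ∀ x : Fin k → R, enorm (x - a) < δ →
    enorm (fun i => f x i - f a i - ∑ j, J i j * (x j - a j)) ≤ ε * enorm (x - a)

/-- `f` has gradient `g` at `a` (scalar-valued version). -/
def HasGradAtPt {k : ℕ} (f : (Fin k → R) → R) (g : Fin k → R) (a : Fin k → R) : Prop :=
  ∀ ε : R, 0 < ε → ∃ δ : R, 0 < δ ∧ ∀ x : Fin k → R, enorm (x - a) < δ →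
    |f x - f a - ∑ j, g j * (x j - a j)| ≤ ε * enorm (x - a)

variable [TopologicalSpace R] [OrderTopology R]

/-- `f` is C¹ on `U`, with Jacobian matrix function `J` (continuous on `U`). -/
def IsC1On {k l : ℕ} (f : (Fin k → R) → Fin l → R) (U : Set (Fin k → R))
    (J : (Fin k → R) → Fin l → Fin k → R) : Prop :=
  (∀ a ∈ U, HasDerivAtPt f (J a) a) ∧ ContinuousOn J U

/-- `f` is C¹ on `U` (scalar version), with gradient function `g` (continuous on `U`). -/
def IsC1ScalarOn {k : ℕ} (f : (Fin k → R) → R) (U : Set (Fin k → R))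
    (g : (Fin k → R) → Fin k → R) : Prop :=
  (∀ a ∈ U, HasGradAtPt f (g a) a) ∧ ContinuousOn g U

variable (L : FirstOrder.Language) [L.Structure R]

/-- `(U, V, ψ, J)` is a definable C¹ parametrization (chart) of a relatively open piece `U` of
`S ⊆ R^n` by an open set `V ⊆ R^d`: `ψ` is a definable C¹ immersion mapping `V` bijectively
and bi-continuously onto `U`. -/
def IsC1Param (A : Set R) {n d : ℕ} (S : Set (Fin n → R)) (U : Set (Fin n → R))
    (V : Set (Fin d → R)) (ψ : (Fin d → R) → Fin n → R)
    (J : (Fin d → R) → Fin n → Fin d → R) : Prop :=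
  IsOpen V ∧ (∃ W : Set (Fin n → R), IsOpen W ∧ U = S ∩ W) ∧
  Set.Definable A L V ∧ Set.Definable A L U ∧ DefFun L A ψ ∧
  IsC1On ψ V J ∧ Set.InjOn ψ V ∧ ψ '' V = U ∧
  (∀ x ∈ V, LinearIndependent R (fun j : Fin d => fun i : Fin n => J x i j)) ∧
  (∀ V' ⊆ V, IsOpen V' → ∃ W : Set (Fin n → R), IsOpen W ∧ ψ '' V' = U ∩ W)

/-- `S ⊆ R^n` is a definable C¹ submanifold of dimension `d`: it admits a finite cover by
definable C¹ charts. -/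
def IsDefC1Manifold (A : Set R) {n : ℕ} (S : Set (Fin n → R)) (d : ℕ) : Prop :=
  ∃ (N : ℕ) (U : Fin N → Set (Fin n → R)) (V : Fin N → Set (Fin d → R))
    (ψ : Fin N → (Fin d → R) → Fin n → R) (J : Fin N → (Fin d → R) → Fin n → Fin d → R),
    S ⊆ (⋃ i, U i) ∧ ∀ i, IsC1Param L A S (U i) (V i) (ψ i) (J i)

/-- `T` is the tangent space of the `d`-dimensional definable C¹ submanifold `S` at `a ∈ S`:
the span of the columns of the Jacobian of some definable chart at `a`. -/
def IsTangentAt (A : Set R) {n : ℕ} (S : Set (Fin n → R)) (d : ℕ) (a : Fin n → R)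
    (T : Submodule R (Fin n → R)) : Prop :=
  ∃ (U : Set (Fin n → R)) (V : Set (Fin d → R)) (ψ : (Fin d → R) → Fin n → R)
    (J : (Fin d → R) → Fin n → Fin d → R) (x : Fin d → R),
    IsC1Param L A S U V ψ J ∧ x ∈ V ∧ ψ x = a ∧
    T = Submodule.span R (Set.range fun j : Fin d => fun i : Fin n => J x i j)

/-- `P` is the matrix of the orthogonal projection of `R^n` onto the subspace `W`
(with respect to the standard inner product). -/
def IsOrthProjOnto {n : ℕ} (W : Submodule R (Fin n → R)) (P : Matrix (Fin n) (Fin n) R) :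
    Prop :=
  (∀ x : Fin n → R, P.mulVec x ∈ W) ∧ (∀ w ∈ W, P.mulVec w = w) ∧
  (∀ x : Fin n → R, ∀ w ∈ W, (x - P.mulVec x) ⬝ᵥ w = 0)

end LipStrat

end Calc
section Strat

namespace LipStrat

open Matrix

variable {R : Type*} [Field R] [LinearOrder R] [IsStrictOrderedRing R] [IsRealClosed R]
variable [TopologicalSpace R] [OrderTopology R]
variable (L : FirstOrder.Language) [L.Structure R]

/-- `X^{i-1}`, with the convention `X^{-1} = ∅`. -/
def Xlow {n : ℕ} (X' : ℕ → Set (Fin n → R)) (i : ℕ) : Set (Fin n → R) :=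
  if i = 0 then ∅ else X' (i - 1)

/-- The `i`-th skeleton `X̊^i = X^i ∖ X^{i-1}` of a stratification. -/
def skel {n : ℕ} (X' : ℕ → Set (Fin n → R)) (i : ℕ) : Set (Fin n → R) :=
  X' i \ Xlow X' i

/-- `u` is relatively closed in `s`. -/
def RelClosedIn {n : ℕ} (u s : Set (Fin n → R)) : Prop :=
  u ⊆ s ∧ closure u ∩ s ⊆ u

/-- `s` is definably connected: it is not the disjoint union of two nonempty relatively
closed definable subsets. -/
def DefConnected (A : Set R) {n : ℕ} (s : Set (Fin n → R)) : Prop :=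
  ∀ u v : Set (Fin n → R), Set.Definable A L u → Set.Definable A L v →
    RelClosedIn u s → RelClosedIn v s → u ∪ v = s → u ∩ v = ∅ → u = ∅ ∨ v = ∅

/-- `c` is a stratum of the stratification `X'`: a definably connected component of one of
the skeletons. -/
def IsStratum (A : Set R) {n : ℕ} (X' : ℕ → Set (Fin n → R)) (c : Set (Fin n → R)) : Prop :=
  ∃ i : ℕ, c.Nonempty ∧ c ⊆ skel X' i ∧ Set.Definable A L c ∧ DefConnected L A c ∧
    ∀ c' : Set (Fin n → R), c ⊆ c' → c' ⊆ skel X' i → Set.Definable A L c' →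
      DefConnected L A c' → c' = c

/-- `X' = (X^0 ⊆ X^1 ⊆ ⋯ ⊆ X^d = X)` is a definable stratification of the `d`-dimensional
definable set `X ⊆ R^n` (with parameters in `A`). -/
def IsDefStratification (A : Set R) {n : ℕ} (d : ℕ) (X' : ℕ → Set (Fin n → R))
    (X : Set (Fin n → R)) : Prop :=
  (∀ i j : ℕ, i ≤ j → X' i ⊆ X' j) ∧
  (∀ i : ℕ, d ≤ i → X' i = X) ∧
  (∀ i : ℕ, Set.Definable A L (X' i)) ∧
  (∀ i : ℕ, closure (X' i) ∩ X ⊆ X' i) ∧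
  (∀ i : ℕ, odim (X' i) ≤ i) ∧
  (∀ i : ℕ, i ≤ d → skel X' i = ∅ ∨ IsDefC1Manifold L A (skel X' i) i) ∧
  (∀ c c' : Set (Fin n → R), IsStratum L A X' c → IsStratum L A X' c' →
    (c' ∩ closure c).Nonempty → c' ⊆ closure c)

variable {n : ℕ}

/-- Condition (1) on chains: `‖a⁰ - aˡ‖ < c · dist(a⁰, X^{eₗ})`. -/
def chainIneq1 (c : R) (X' : ℕ → Set (Fin n → R)) (a0 al : Fin n → R) (el : ℕ) : Prop :=
  enorm (a0 - al) < c * infDist a0 (X' el)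

/-- `dist(a⁰, X^{i-1}) ≥ C' · dist(a⁰, X^i)` (trivially true if `X^{i-1} = ∅`). -/
def distGeCond (C' : R) (X' : ℕ → Set (Fin n → R)) (a0 : Fin n → R) (i : ℕ) : Prop :=
  Xlow X' i = ∅ ∨ C' * infDist a0 (X' i) ≤ infDist a0 (Xlow X' i)

/-- `dist(a⁰, X^{i-1}) < c' · dist(a⁰, X^i)` (false if `X^{i-1} = ∅`). -/
def distLtCond (c' : R) (X' : ℕ → Set (Fin n → R)) (a0 : Fin n → R) (i : ℕ) : Prop :=
  Xlow X' i ≠ ∅ ∧ infDist a0 (Xlow X' i) < c' * infDist a0 (X' i)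

/-- `a⁰, …, aᵐ` is a plain chain for the constants `(c, c', C')`. -/
def IsPlainChain (c c' C' : R) (X' : ℕ → Set (Fin n → R)) (m : ℕ) (e : ℕ → ℕ)
    (a : ℕ → Fin n → R) : Prop :=
  (∀ l : ℕ, l ≤ m → a l ∈ skel X' (e l)) ∧
  (∀ k l : ℕ, k < l → l ≤ m → e l < e k) ∧
  (∀ l : ℕ, 1 ≤ l → l ≤ m → chainIneq1 c X' (a 0) (a l) (e l)) ∧
  (∀ i : ℕ, e m ≤ i → i < e 0 →
    ((∃ l : ℕ, 1 ≤ l ∧ l ≤ m ∧ e l = i) → distGeCond C' X' (a 0) i) ∧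
    ((¬ ∃ l : ℕ, 1 ≤ l ∧ l ≤ m ∧ e l = i) → distLtCond c' X' (a 0) i))

/-- `a⁰, a¹, …, aᵐ` is an augmented chain for the constants `(c, c', C', C'')`:
`a⁰, a², …, aᵐ` is a plain chain and `a¹` is an extra point in the same skeleton as `a⁰`
with `‖a⁰ - a¹‖ ≤ dist(a⁰, X^{e₁-1})/C''`. -/
def IsAugChain (c c' C' C'' : R) (X' : ℕ → Set (Fin n → R)) (m : ℕ) (e : ℕ → ℕ)
    (a : ℕ → Fin n → R) : Prop :=
  1 ≤ m ∧ e 1 = e 0 ∧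
  (∀ l : ℕ, l ≤ m → a l ∈ skel X' (e l)) ∧
  (∀ k l : ℕ, 1 ≤ k → k < l → l ≤ m → e l < e k) ∧
  (∀ l : ℕ, 2 ≤ l → l ≤ m → chainIneq1 c X' (a 0) (a l) (e l)) ∧
  (∀ i : ℕ, e m ≤ i → i < e 0 →
    ((∃ l : ℕ, 2 ≤ l ∧ l ≤ m ∧ e l = i) → distGeCond C' X' (a 0) i) ∧
    ((¬ ∃ l : ℕ, 2 ≤ l ∧ l ≤ m ∧ e l = i) → distLtCond c' X' (a 0) i)) ∧
  (Xlow X' (e 1) = ∅ ∨ C'' * enorm (a 0 - a 1) ≤ infDist (a 0) (Xlow X' (e 1)))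

/-- `P l` is the orthogonal projection onto the tangent space of the skeleton `X̊^{eₗ}`
at `aˡ`, for `l ≤ m`. -/
def ChainProjs (A : Set R) (X' : ℕ → Set (Fin n → R)) (e : ℕ → ℕ) (a : ℕ → Fin n → R)
    (P : ℕ → Matrix (Fin n) (Fin n) R) (m : ℕ) : Prop :=
  ∀ l : ℕ, l ≤ m → ∃ T : Submodule R (Fin n → R),
    IsTangentAt L A (skel X' (e l)) (e l) (a l) T ∧ IsOrthProjOnto T (P l)

/-- The ordered product `P lo * P (lo+1) * ⋯ * P (lo+len-1)`. -/
def prodP (P : ℕ → Matrix (Fin n) (Fin n) R) (lo len : ℕ) : Matrix (Fin n) (Fin n) R :=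
  ((List.range len).map (fun l => P (lo + l))).prod

/-- The Mostowski inequality `‖Q‖ < C''' ‖a⁰-a¹‖ / dist(a⁰, X^{e_m - 1})`, where the left hand
side is required to be `0` if `X^{e_m-1} = ∅`. -/
def mostowskiIneq (C''' : R) (X' : ℕ → Set (Fin n → R)) (em : ℕ) (a0 a1 : Fin n → R)
    (Q : Matrix (Fin n) (Fin n) R) : Prop :=
  if Xlow X' em = ∅ then Q = 0
  else opNorm Q * infDist a0 (Xlow X' em) < C''' * enorm (a0 - a1)

/-- The stratification `X'` satisfies the Mostowski Conditions for `(c, c', C', C'', C''')`. -/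
def SatisfiesMostowski (A : Set R) (X' : ℕ → Set (Fin n → R)) (c c' C' C'' C''' : R) : Prop :=
  (∀ (m : ℕ) (e : ℕ → ℕ) (a : ℕ → Fin n → R), 1 ≤ m → IsPlainChain c c' C' X' m e a →
    ∀ P : ℕ → Matrix (Fin n) (Fin n) R, ChainProjs L A X' e a P m →
      mostowskiIneq C''' X' (e m) (a 0) (a 1) ((1 - P 0) * prodP P 1 m)) ∧
  (∀ (m : ℕ) (e : ℕ → ℕ) (a : ℕ → Fin n → R), IsAugChain c c' C' C'' X' m e a →
    ∀ P : ℕ → Matrix (Fin n) (Fin n) R, ChainProjs L A X' e a P m →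
      mostowskiIneq C''' X' (e m) (a 0) (a 1) ((P 0 - P 1) * prodP P 2 (m - 1)))

/-- `X'` is a Lipschitz stratification: for every `c > 1` there is `C` such that the
Mostowski Conditions hold for `(c, 2c², 2c², 2c, C)`. -/
def IsLipschitzStrat (A : Set R) (X' : ℕ → Set (Fin n → R)) : Prop :=
  ∀ c : R, 1 < c → ∃ C : R,
    SatisfiesMostowski L A X' c (2 * c ^ 2) (2 * c ^ 2) (2 * c) C

end LipStrat

end Strat
section Val

namespace LipStrat

open Matrix

variable {R : Type*} [Field R] [LinearOrder R] [IsStrictOrderedRing R] [IsRealClosed R]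

/-- The convex closure of a subset `R₀ ⊆ R`: the elements bounded by an element of `R₀`.
When `R₀` is (the carrier of) an elementary substructure, this is a valuation ring `O` of `R`. -/
def convexClosure (R₀ : Set R) : Set R :=
  {a : R | ∃ b ∈ R₀, -b < a ∧ a < b}

/-- `v(x) ≥ v(y)` for the valuation `v` associated to the valuation ring `O`:
`x` is an `O`-multiple of `y`. -/
def vge (O : Set R) (x y : R) : Prop := ∃ u ∈ O, x = u * y

/-- `v(x) > v(y)`. -/
def vgt (O : Set R) (x y : R) : Prop := vge O x y ∧ ¬ vge O y x

/-- `v(x) = v(y)`. -/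
def veq (O : Set R) (x y : R) : Prop := vge O x y ∧ vge O y x

variable {n : ℕ}

/-- `v(s) > v-dist(a₀, X)`, where `v(s) = min_i v(sᵢ)` and
`v-dist(a₀, X) = sup_{x ∈ X} v(a₀ - x) = v(dist(a₀, X))` (`-∞` for `X = ∅`). -/
def vdistLtVec (O : Set R) (s : Fin n → R) (a0 : Fin n → R) (X : Set (Fin n → R)) : Prop :=
  X = ∅ ∨ ∀ i, vgt O (s i) (infDist a0 X)

/-- `v(s) ≥ v-dist(a₀, X)`. -/
def vdistLeVec (O : Set R) (s : Fin n → R) (a0 : Fin n → R) (X : Set (Fin n → R)) : Prop :=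
  X = ∅ ∨ ∀ i, vge O (s i) (infDist a0 X)

/-- `v(s) = v-dist(a₀, X)` (which in particular forces `X ≠ ∅`). -/
def vdistEqVec (O : Set R) (s : Fin n → R) (a0 : Fin n → R) (X : Set (Fin n → R)) : Prop :=
  X ≠ ∅ ∧ (∀ i, vge O (s i) (infDist a0 X)) ∧ (∃ i, vge O (infDist a0 X) (s i))

/-- `a⁰, …, aᵐ` is a plain val-chain. -/
def IsPlainValChain (O : Set R) (X' : ℕ → Set (Fin n → R)) (m : ℕ) (e : ℕ → ℕ)
    (a : ℕ → Fin n → R) : Prop :=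
  (∀ l : ℕ, l ≤ m → a l ∈ skel X' (e l)) ∧
  (∀ k l : ℕ, k < l → l ≤ m → e l < e k) ∧
  (∀ l : ℕ, 1 ≤ l → l ≤ m → vdistLtVec O (a 0 - a l) (a 0) (Xlow X' (e l))) ∧
  (∀ l : ℕ, 1 ≤ l → l ≤ m → vdistEqVec O (a 0 - a l) (a 0) (Xlow X' (e (l - 1))))

/-- `a⁰, …, aᵐ` is an augmented val-chain. -/
def IsAugValChain (O : Set R) (X' : ℕ → Set (Fin n → R)) (m : ℕ) (e : ℕ → ℕ)
    (a : ℕ → Fin n → R) : Prop :=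
  1 ≤ m ∧ e 1 = e 0 ∧
  (∀ l : ℕ, l ≤ m → a l ∈ skel X' (e l)) ∧
  (∀ k l : ℕ, 1 ≤ k → k < l → l ≤ m → e l < e k) ∧
  (∀ l : ℕ, 1 ≤ l → l ≤ m → vdistLtVec O (a 0 - a l) (a 0) (Xlow X' (e l))) ∧
  (∀ l : ℕ, 2 ≤ l → l ≤ m → vdistEqVec O (a 0 - a l) (a 0) (Xlow X' (e (l - 1))))

/-- `a⁰, …, aᵐ` is a weak plain val-chain (the strict inequality on distances is weakened). -/
def IsWeakPlainValChain (O : Set R) (X' : ℕ → Set (Fin n → R)) (m : ℕ) (e : ℕ → ℕ)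
    (a : ℕ → Fin n → R) : Prop :=
  (∀ l : ℕ, l ≤ m → a l ∈ skel X' (e l)) ∧
  (∀ k l : ℕ, k < l → l ≤ m → e l < e k) ∧
  (∀ l : ℕ, 1 ≤ l → l ≤ m → vdistLeVec O (a 0 - a l) (a 0) (Xlow X' (e l))) ∧
  (∀ l : ℕ, 1 ≤ l → l ≤ m → vdistEqVec O (a 0 - a l) (a 0) (Xlow X' (e (l - 1))))

/-- `a⁰, …, aᵐ` is a weak augmented val-chain. -/
def IsWeakAugValChain (O : Set R) (X' : ℕ → Set (Fin n → R)) (m : ℕ) (e : ℕ → ℕ)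
    (a : ℕ → Fin n → R) : Prop :=
  1 ≤ m ∧ e 1 = e 0 ∧
  (∀ l : ℕ, l ≤ m → a l ∈ skel X' (e l)) ∧
  (∀ k l : ℕ, 1 ≤ k → k < l → l ≤ m → e l < e k) ∧
  (∀ l : ℕ, 1 ≤ l → l ≤ m → vdistLeVec O (a 0 - a l) (a 0) (Xlow X' (e l))) ∧
  (∀ l : ℕ, 2 ≤ l → l ≤ m → vdistEqVec O (a 0 - a l) (a 0) (Xlow X' (e (l - 1))))

/-- The valuative Mostowski inequality `v(Q) ≥ λ₁ - λ_{m+1}`, where `λ₁ = v(a⁰ - a¹)` and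
`λ_{m+1} = v-dist(a⁰, X^{e_m - 1})`. If `λ_{m+1} = -∞` (i.e. `X^{e_m-1} = ∅`), `Q` must be `0`. -/
def valMostIneq (O : Set R) (X' : ℕ → Set (Fin n → R)) (em : ℕ) (a0 a1 : Fin n → R)
    (Q : Matrix (Fin n) (Fin n) R) : Prop :=
  if Xlow X' em = ∅ then Q = 0
  else ∀ i j : Fin n, ∃ k : Fin n, vge O (Q i j * infDist a0 (Xlow X' em)) ((a0 - a1) k)

variable [TopologicalSpace R] [OrderTopology R]
variable (L : FirstOrder.Language) [L.Structure R]

/-- `X'` satisfies the valuative Mostowski Condition at every (strict) val-chain. -/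
def IsValLipschitz (A : Set R) (O : Set R) (X' : ℕ → Set (Fin n → R)) : Prop :=
  (∀ (m : ℕ) (e : ℕ → ℕ) (a : ℕ → Fin n → R), 1 ≤ m → IsPlainValChain O X' m e a →
    ∀ P : ℕ → Matrix (Fin n) (Fin n) R, ChainProjs L A X' e a P m →
      valMostIneq O X' (e m) (a 0) (a 1) ((1 - P 0) * prodP P 1 m)) ∧
  (∀ (m : ℕ) (e : ℕ → ℕ) (a : ℕ → Fin n → R), IsAugValChain O X' m e a →
    ∀ P : ℕ → Matrix (Fin n) (Fin n) R, ChainProjs L A X' e a P m →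
      valMostIneq O X' (e m) (a 0) (a 1) ((P 0 - P 1) * prodP P 2 (m - 1)))

/-- `X'` satisfies the valuative Mostowski Condition at every weak val-chain. -/
def SatisfiesWeakValMostowski (A : Set R) (O : Set R) (X' : ℕ → Set (Fin n → R)) : Prop :=
  (∀ (m : ℕ) (e : ℕ → ℕ) (a : ℕ → Fin n → R), 1 ≤ m → IsWeakPlainValChain O X' m e a →
    ∀ P : ℕ → Matrix (Fin n) (Fin n) R, ChainProjs L A X' e a P m →
      valMostIneq O X' (e m) (a 0) (a 1) ((1 - P 0) * prodP P 1 m)) ∧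
  (∀ (m : ℕ) (e : ℕ → ℕ) (a : ℕ → Fin n → R), IsWeakAugValChain O X' m e a →
    ∀ P : ℕ → Matrix (Fin n) (Fin n) R, ChainProjs L A X' e a P m →
      valMostIneq O X' (e m) (a 0) (a 1) ((P 0 - P 1) * prodP P 2 (m - 1)))

end LipStrat

end Val
section Aligned

namespace LipStrat

open Matrix

variable {R : Type*} [Field R] [LinearOrder R] [IsStrictOrderedRing R] [IsRealClosed R]

/-- Projection to the first `d` coordinates. -/
def prle {n : ℕ} (d : ℕ) (h : d ≤ n) (x : Fin n → R) : Fin d → R :=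
  fun i => x (Fin.castLE h i)

/-- Projection to the last `n - d` coordinates. -/
def prgt {n : ℕ} (d : ℕ) (h : d ≤ n) (x : Fin n → R) : Fin (n - d) → R :=
  fun i => x (Fin.cast (Nat.add_sub_cancel' h) (Fin.natAdd d i))

/-- Projection to the first `d` coordinates (junk value if `d > n`). -/
def prleD {n : ℕ} (d : ℕ) (x : Fin n → R) : Fin d → R :=
  if h : d ≤ n then prle d h x else fun _ => 0

/-- Projection to the last `n - d` coordinates (junk value if `d > n`). -/
def prgtD {n : ℕ} (d : ℕ) (x : Fin n → R) : Fin (n - d) → R :=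
  if h : d ≤ n then prgt d h x else fun _ => 0

variable [TopologicalSpace R] [OrderTopology R]
variable (L : FirstOrder.Language) [L.Structure R]

/-- `S ⊆ R^n` is aligned: for `d = dim S`, the base `S̄ = pr_{≤d}(S)` is open and `S` is the
graph of a definable C¹ function `f : S̄ → R^{n-d}` all of whose partial derivatives have
nonnegative valuation (i.e. lie in the valuation ring `O`). -/
def IsAligned (A O : Set R) {n : ℕ} (S : Set (Fin n → R)) : Prop :=
  ∃ (d : ℕ) (h : d ≤ n) (f : (Fin d → R) → Fin (n - d) → R)
    (J : (Fin d → R) → Fin (n - d) → Fin d → R),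
    d = odim S ∧ IsOpen (prle d h '' S) ∧ DefFun L A f ∧
    IsC1On f (prle d h '' S) J ∧
    (∀ a ∈ prle d h '' S, ∀ i j, J a i j ∈ O) ∧
    S = {x : Fin n → R | prle d h x ∈ prle d h '' S ∧ prgt d h x = f (prle d h x)}

end LipStrat

end Aligned

section Misc

namespace LipStrat

open Matrix

variable {R : Type*} [Field R] [LinearOrder R] [IsStrictOrderedRing R] [IsRealClosed R]

/-- The fiber of a definable family `X ⊆ R^n × Q` at the parameter `q`. -/
def famFiber {n N : ℕ} (X : Set ((Fin n ⊕ Fin N) → R)) (q : Fin N → R) :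
    Set (Fin n → R) :=
  {x | Sum.elim x q ∈ X}

/-- `M ∈ GLₙ(O)`: `M` is invertible and both `M` and its inverse have entries in `O`. -/
def MemGLO {n : ℕ} (O : Set R) (M : Matrix (Fin n) (Fin n) R) : Prop :=
  ∃ M' : Matrix (Fin n) (Fin n) R, M * M' = 1 ∧ M' * M = 1 ∧
    (∀ i j, M i j ∈ O) ∧ (∀ i j, M' i j ∈ O)

/-- `v(a) ≥ v(b) - v-dist(y, Z)`, with the conventions that the right hand side is `∞`
(forcing `a = 0`) if `Z = ∅` or `b = 0`, and `-∞` (trivially true) if `v-dist(y,Z) = ∞`. -/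
def vgeSubVdist {k : ℕ} (O : Set R) (a b : R) (y : Fin k → R) (Z : Set (Fin k → R)) : Prop :=
  if Z = ∅ then a = 0
  else if b = 0 then a = 0
  else if infDist y Z = 0 then True
  else vge O (a * infDist y Z) b

end LipStrat

end Misc

section Sedated

namespace LipStrat

open Matrix

variable {R : Type*} [Field R] [LinearOrder R] [IsStrictOrderedRing R] [IsRealClosed R]

/-- `ζ_ℓ(x) = dist(pr_{≤ e_ℓ}(x), R^{e_ℓ} ∖ pr_{≤ e_ℓ}(X))`. -/
def zeta {e1 : ℕ} (el : ℕ) (X : Set (Fin e1 → R)) (x : Fin e1 → R) : R :=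
  infDist (prleD el x) ((prleD el '' X)ᶜ)

/-- `ζ_ℓ = ∞`, i.e. the projection of `X` to the first `e_ℓ` coordinates is everything. -/
def zetaInf {e1 : ℕ} (el : ℕ) (X : Set (Fin e1 → R)) : Prop :=
  ((prleD el '' X)ᶜ : Set (Fin el → R)) = ∅

/-- `σ_ℓ(x) = max {1, ‖pr_{> e_ℓ}(x)‖ · ζ_{ℓ-1}(x)⁻¹}` (equal to `1` if `ζ_{ℓ-1} = ∞`). -/
def sigmaFn {e1 : ℕ} (e : ℕ → ℕ) (X : Set (Fin e1 → R)) (l : ℕ) (x : Fin e1 → R) : R :=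
  if zetaInf (e (l - 1)) X then 1
  else max 1 (enorm (prgtD (e l) x) * (zeta (e (l - 1)) X x)⁻¹)

/-- The sedation inequality `v(d) ≥ v(u) - v(ζ) + Σ v(σ)`, encoded multiplicatively, with the
conventions: if `ζ = ∞` the right hand side is `∞` (forcing `d = 0`); if `ζ = 0` it is
`-∞` (trivially true). -/
def sedIneq (O : Set R) (dv u ζ σp : R) (ζinf : Prop) : Prop :=
  if ζinf then dv = 0
  else if ζ = 0 then True
  else vge O (dv * ζ) (u * σp)

/-- The three versions of sedation. -/
inductive SedVersion | a | b | c

/-- The quantity `u` appearing in the sedation condition. -/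
def sedU {e1 : ℕ} (ver : SedVersion) (e : ℕ → ℕ) (f : (Fin e1 → R) → R)
    (x : Fin e1 → R) : R :=
  match ver with
  | .a => f x
  | .b => max |f x| (enorm (prgtD (e 2) x))
  | .c => 1

variable [TopologicalSpace R] [OrderTopology R]

/-- `f : X → R` (`X ⊆ R^{e 1}`) is `e_{[1,m']}`-v-sedated: it is C¹ and
`v(∂ᵢ f(x)) ≥ v(u(x)) - v(ζ_{m'}(x)) + Σ_{ℓ=2}^{m'} v(σ_ℓ(x))` for all `x ∈ X` and
all `1 ≤ i ≤ e_{m'}`. -/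
def IsSedated (O : Set R) (ver : SedVersion) (e : ℕ → ℕ) (m' : ℕ)
    (X : Set (Fin (e 1) → R)) (f : (Fin (e 1) → R) → R) : Prop :=
  ∃ g : (Fin (e 1) → R) → Fin (e 1) → R,
    IsC1ScalarOn f X g ∧
    ∀ x ∈ X, ∀ i : Fin (e 1), (i : ℕ) < e m' →
      sedIneq O (g x i) (sedU ver e f x) (zeta (e m') X x)
        (∏ l ∈ Finset.Icc 2 m', sigmaFn e X l x) (zetaInf (e m') X)

/-- `f : X → R` is `e_{[1,m']}`-c₂-sedated: it is C², `v(Jac f) ≥ 0`, and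
`v(∂ᵢⱼ f(x)) ≥ - v(ζ_{m'}(x)) + Σ_{ℓ=2}^{m'} v(σ_ℓ(x))` for `1 ≤ i ≤ e_{m'}`,
`1 ≤ j ≤ e_1`. -/
def IsC2Sedated (O : Set R) (e : ℕ → ℕ) (m' : ℕ)
    (X : Set (Fin (e 1) → R)) (f : (Fin (e 1) → R) → R) : Prop :=
  ∃ (g : (Fin (e 1) → R) → Fin (e 1) → R)
    (H : (Fin (e 1) → R) → Fin (e 1) → Fin (e 1) → R),
    IsC1ScalarOn f X g ∧
    (∀ j : Fin (e 1), IsC1ScalarOn (fun y => g y j) X (fun y => H y j)) ∧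
    (∀ x ∈ X, ∀ j : Fin (e 1), g x j ∈ O) ∧
    ∀ x ∈ X, ∀ i : Fin (e 1), (i : ℕ) < e m' → ∀ j : Fin (e 1),
      sedIneq O (H x j i) 1 (zeta (e m') X x)
        (∏ l ∈ Finset.Icc 2 m', sigmaFn e X l x) (zetaInf (e m') X)

end LipStrat

end Sedated
section More

namespace LipStrat

open Matrix

variable {R : Type*} [Field R] [LinearOrder R] [IsStrictOrderedRing R] [IsRealClosed R]

/-- `v(M) ≥ v(s) - v(t)` for a matrix `M` and vectors `s, t`. -/
def vMatGeSubVec {n : ℕ} (O : Set R) (M : Matrix (Fin n) (Fin n) R) (s t : Fin n → R) :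
    Prop :=
  ∀ i j : Fin n, ∃ k : Fin n, ∀ l : Fin n, vge O (M i j * t l) (s k)

/-- `v(M) ≥ v(s) - v-dist(a₀, X)` for a matrix `M` and a vector `s`
(`M` must be `0` if `X = ∅`). -/
def vMatGeSubDist {n : ℕ} (O : Set R) (M : Matrix (Fin n) (Fin n) R) (s : Fin n → R)
    (a0 : Fin n → R) (X : Set (Fin n → R)) : Prop :=
  if X = ∅ then M = 0
  else ∀ i j : Fin n, ∃ k : Fin n, vge O (M i j * infDist a0 X) (s k)

/-- `f` has partial derivative `c` in the `i`-th coordinate direction at `y`. -/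
def HasPartialAt {k : ℕ} (f : (Fin k → R) → R) (i : Fin k) (c : R) (y : Fin k → R) : Prop :=
  ∀ ε : R, 0 < ε → ∃ δ : R, 0 < δ ∧ ∀ h : R, h ≠ 0 → |h| < δ →
    |f (fun j => y j + (if j = i then h else 0)) - f y - c * h| ≤ ε * |h|

/-- `v(J(W)) ≥ 0`: the subspace `W ⊆ R^n` is the graph of a linear map
`M_W : R^d → R^{n-d}` all of whose entries lie in `O`
(in particular `W ∈ Gr°_{n,d}`, i.e. `W` projects onto the first `d` coordinates). -/
def JBounded (O : Set R) {n : ℕ} (d : ℕ) (h : d ≤ n) (W : Submodule R (Fin n → R)) : Prop :=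
  ∃ Mv : Matrix (Fin (n - d)) (Fin d) R, (∀ i j, Mv i j ∈ O) ∧
    (W : Set (Fin n → R)) = {x : Fin n → R | prgt d h x = Mv.mulVec (prle d h x)}

/-- The matrix representation of a set `Θ` of `d`-dimensional subspaces of `R^n`:
the set of `n × d` matrices of rank `d` whose column span lies in `Θ`. -/
def grassRep {n d : ℕ} (Θ : Set (Submodule R (Fin n → R))) :
    Set ((Fin n × Fin d) → R) :=
  {M | LinearIndependent R (fun j : Fin d => fun i : Fin n => M (i, j)) ∧
    Submodule.span R (Set.range fun j : Fin d => fun i : Fin n => M (i, j)) ∈ Θ}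

end LipStrat

end More
section FlagHelpers

namespace LipStrat

open Matrix

variable {R : Type*} [Field R] [LinearOrder R] [IsStrictOrderedRing R] [IsRealClosed R]
variable [TopologicalSpace R] [OrderTopology R]

/-- The elementary substructure meets every nonempty definable set given by a formula in `Fin 1`
variables. -/
theorem meets_of_definable (L : FirstOrder.Language) [L.Structure R]
    (R₀ : L.ElementarySubstructure R) (D : Set (Fin 1 → R))
    (hD : Set.Definable (R₀ : Set R) L D) (hne : D.Nonempty) : ∃ x ∈ D, x 0 ∈ R₀ := by
  obtain ⟨x, hx⟩ := hne
  have h1 : {a : R | (fun _ : Fin 1 => a) ∈ D}.Nonempty :=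
    ⟨x 0, by
      have : (fun _ : Fin 1 => x 0) = x := by
        funext i; rw [Subsingleton.elim i 0]
      simpa [this] using hx⟩
  have h2 := R₀.meetsDefinable {a : R | (fun _ : Fin 1 => a) ∈ D} h1
    (by
      unfold Set.Definable₁
      convert hD using 1
      ext y
      have : (fun _ : Fin 1 => y 0) = y := by
        funext i; rw [Subsingleton.elim i 0]
      simp [this])
  obtain ⟨a, ha, ha'⟩ := h2
  first
    | exact ⟨fun _ => a, ha, ha'⟩
    | exact ⟨fun _ => a, ha', ha⟩

theorem op_mem (L : FirstOrder.Language) [L.Structure R]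
    (R₀ : L.ElementarySubstructure R) (f : R → R → R)
    (hf : Set.Definable (∅ : Set R) L {v : Fin 3 → R | f (v 0) (v 1) = v 2})
    {a b : R} (ha : a ∈ R₀) (hb : b ∈ R₀) : f a b ∈ R₀ := by
  have hs : ∀ (c : R) (hc : c ∈ R₀) (i : Fin 3),
      Set.Definable (R₀ : Set R) L {v : Fin 3 → R | v i = c} := by
    intro c hc i
    have := Set.Definable.preimage_comp (fun _ : Fin 1 => i)
      (Set.Definable.singleton_of_mem (L := L) (A := (R₀ : Set R)) hc)
    convert this using 1
    ext v
    simp [funext_iff]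
  have h := ((hf.mono (Set.empty_subset (R₀ : Set R))).inter (hs a ha 0)).inter (hs b hb 1)
  have h' := h.image_comp (fun _ : Fin 1 => (2 : Fin 3))
  obtain ⟨x, ⟨v, ⟨⟨h1, h2⟩, h3⟩, rfl⟩, hx⟩ := meets_of_definable L R₀ _ h'
    ⟨fun _ => f a b, ![a, b, f a b], by simp, by funext i; simp⟩
  simp only [Set.mem_ofPred_eq] at h1 h2 h3
  rw [h2, h3] at h1
  rw [h1]
  exact hx

theorem one_mem_R0 (L : FirstOrder.Language) [L.Structure R]
    (hring : ExpandsOrderedRing (R := R) L)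
    (R₀ : L.ElementarySubstructure R) : (1 : R) ∈ R₀ := by
  have h1 := (hring.mul_def.mono (Set.empty_subset (R₀ : Set R))).preimage_comp
    (fun _ : Fin 3 => (0 : Fin 1))
  have h2 := ((hring.add_def.mono (Set.empty_subset (R₀ : Set R))).preimage_comp
    (fun _ : Fin 3 => (0 : Fin 1))).compl
  obtain ⟨x, ⟨hx1, hx2⟩, hx⟩ := meets_of_definable L R₀ _ (h1.inter h2)
    ⟨fun _ => 1, by simp, by simp⟩
  simp at hx1 hx2
  have : x 0 = 1 := mul_left_cancel₀ hx2 (by rw [hx1, mul_one])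
  rwa [this] at hx

/-- The convex closure of the elementary substructure is a ring containing `[-1,1]`. -/
theorem exists_subring (L : FirstOrder.Language) [L.Structure R]
    (hring : ExpandsOrderedRing (R := R) L)
    (R₀ : L.ElementarySubstructure R) :
    ∃ S : Subring R, (S : Set R) = convexClosure (R₀ : Set R) ∧
      ∀ x : R, |x| ≤ 1 → x ∈ S := by
  have h1 := one_mem_R0 L hring R₀
  have hadd : ∀ {a b : R}, a ∈ R₀ → b ∈ R₀ → a + b ∈ R₀ :=
    fun ha hb => op_mem L R₀ (fun x y => x + y) hring.add_def ha hb
  have hmul : ∀ {a b : R}, a ∈ R₀ → b ∈ R₀ → a * b ∈ R₀ :=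
    fun ha hb => op_mem L R₀ (fun x y => x * y) hring.mul_def ha hb
  have hsmall : ∀ x : R, |x| ≤ 1 → x ∈ convexClosure (R₀ : Set R) := by
    intro x hx
    obtain ⟨h, h'⟩ := abs_le.1 hx
    exact ⟨1 + 1, hadd h1 h1, by linarith, by linarith⟩
  refine ⟨{ carrier := convexClosure (R₀ : Set R)
            mul_mem' := ?_
            one_mem' := hsmall 1 (by simp)
            add_mem' := ?_
            zero_mem' := hsmall 0 (by simp)
            neg_mem' := ?_ }, rfl, hsmall⟩
  · rintro a b ⟨c, hc, hc1, hc2⟩ ⟨d, hd, hd1, hd2⟩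
    refine ⟨c * d, hmul hc hd, ?_⟩
    rw [← abs_lt, abs_mul]
    exact mul_lt_mul'' (abs_lt.2 ⟨hc1, hc2⟩) (abs_lt.2 ⟨hd1, hd2⟩) (abs_nonneg _) (abs_nonneg _)
  · rintro a b ⟨c, hc, hc1, hc2⟩ ⟨d, hd, hd1, hd2⟩
    exact ⟨c + d, hadd hc hd, by linarith, by linarith⟩
  · rintro a ⟨c, hc, hc1, hc2⟩
    exact ⟨c, hc, by linarith, by linarith⟩

/-- `v(M) ≥ v(a) - v(b)`. -/
def Bd {n : ℕ} (S : Subring R) (M : Matrix (Fin n) (Fin n) R) (a b : R) : Prop :=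
  ∀ i j : Fin n, vge (S : Set R) (M i j * b) a

theorem vge_add (S : Subring R) {x y a : R} (hx : vge (S : Set R) x a)
    (hy : vge (S : Set R) y a) : vge (S : Set R) (x + y) a := by
  obtain ⟨u, hu, rfl⟩ := hx
  obtain ⟨w, hw, rfl⟩ := hy
  exact ⟨u + w, S.add_mem hu hw, by ring⟩

theorem vge_sum (S : Subring R) {n : ℕ} {f : Fin n → R} {a : R}
    (h : ∀ i, vge (S : Set R) (f i) a) : vge (S : Set R) (∑ i, f i) a := by
  choose u hu hu' using h
  exact ⟨∑ i, u i, S.sum_mem fun i _ => hu i, by rw [Finset.sum_mul]; simp [← hu']⟩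

theorem Bd.add {n : ℕ} {S : Subring R} {M N : Matrix (Fin n) (Fin n) R} {a b : R}
    (hM : Bd S M a b) (hN : Bd S N a b) : Bd S (M + N) a b := by
  intro i j
  rw [Matrix.add_apply, add_mul]
  exact vge_add S (hM i j) (hN i j)

theorem Bd.neg {n : ℕ} {S : Subring R} {M : Matrix (Fin n) (Fin n) R} {a b : R}
    (hM : Bd S M a b) : Bd S (-M) a b := by
  intro i j
  obtain ⟨u, hu, h⟩ := hM i j
  exact ⟨-u, S.neg_mem hu, by rw [Matrix.neg_apply, neg_mul, h, neg_mul]⟩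

theorem Bd.mul_left {n : ℕ} {S : Subring R} {A M : Matrix (Fin n) (Fin n) R} {a b : R}
    (hA : ∀ i j, A i j ∈ S) (hM : Bd S M a b) : Bd S (A * M) a b := by
  intro i j
  rw [Matrix.mul_apply, Finset.sum_mul]
  refine vge_sum S fun r => ?_
  obtain ⟨u, hu, h⟩ := hM r j
  exact ⟨A i r * u, S.mul_mem (hA i r) hu, by rw [mul_assoc, h, mul_assoc]⟩

theorem Bd.mul {n : ℕ} {S : Subring R} {M N : Matrix (Fin n) (Fin n) R} {a b c d : R}
    (hM : Bd S M a b) (hcb : vge (S : Set R) c b) (hN : Bd S N c d) : Bd S (M * N) a d := by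
  intro i j
  rw [Matrix.mul_apply, Finset.sum_mul]
  refine vge_sum S fun r => ?_
  obtain ⟨u, hu, h⟩ := hN r j
  obtain ⟨w, hw, h'⟩ := hcb
  obtain ⟨z, hz, h''⟩ := hM i r
  refine ⟨u * w * z, S.mul_mem (S.mul_mem hu hw) hz, ?_⟩
  calc M i r * N r j * d = M i r * (N r j * d) := by ring
    _ = u * w * (M i r * b) := by rw [h, h']; ring
    _ = _ := by rw [h'']; ring

theorem proj_abs_le {n : ℕ} {W : Submodule R (Fin n → R)} {P : Matrix (Fin n) (Fin n) R}
    (hP : IsOrthProjOnto W P) (i j : Fin n) : |P i j| ≤ 1 := by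
  obtain ⟨h1, -, h3⟩ := hP
  have h := h3 (Pi.single j 1) _ (h1 (Pi.single j 1))
  rw [sub_dotProduct] at h
  simp only [Matrix.mulVec_single_one, single_one_dotProduct] at h
  have hcol : ∀ r, P.col j r = P r j := fun r => rfl
  simp only [dotProduct, hcol] at h
  have hle : ∀ r, P r j * P r j ≤ P j j := by
    intro r
    have := Finset.single_le_sum (f := fun x => P x j * P x j)
      (fun x _ => mul_self_nonneg _) (Finset.mem_univ r)
    have h' : P r j * P r j ≤ ∑ x, P x j * P x j := this
    linarith
  have hj := hle j
  have hj1 : P j j ≤ 1 := by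
    by_contra hc
    push Not at hc
    nlinarith
  have := hle i
  rw [← sq_le_one_iff_abs_le_one]
  nlinarith

theorem proj_mul {n : ℕ} {W W' : Submodule R (Fin n → R)} {P P' : Matrix (Fin n) (Fin n) R}
    (hP : IsOrthProjOnto W P) (hP' : IsOrthProjOnto W' P') (h : W' ≤ W) : P * P' = P' := by
  apply Matrix.ext_of_mulVec_single
  intro i
  rw [← Matrix.mulVec_mulVec]
  exact hP.2.1 _ (h (hP'.1 _))

theorem proj_unique {n : ℕ} {W : Submodule R (Fin n → R)} {P P' : Matrix (Fin n) (Fin n) R}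
    (hP : IsOrthProjOnto W P) (hP' : IsOrthProjOnto W P') : P = P' := by
  apply Matrix.ext_of_mulVec_single
  intro i
  set x : Fin n → R := Pi.single i 1
  have hm : P.mulVec x - P'.mulVec x ∈ W := W.sub_mem (hP.1 x) (hP'.1 x)
  have h1 := hP.2.2 x _ hm
  have h2 := hP'.2.2 x _ hm
  have h3 : (P.mulVec x - P'.mulVec x) ⬝ᵥ (P.mulVec x - P'.mulVec x) = 0 := by
    have : P.mulVec x - P'.mulVec x = (x - P'.mulVec x) - (x - P.mulVec x) := by abel
    rw [this, sub_dotProduct, ← this, h1, h2, sub_zero]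
  exact sub_eq_zero.1 (dotProduct_self_eq_zero.1 h3)

theorem prodP_succ {n : ℕ} (P : ℕ → Matrix (Fin n) (Fin n) R) (lo len : ℕ) :
    prodP P lo (len + 1) = P lo * prodP P (lo + 1) len := by
  unfold prodP
  rw [List.range_succ_eq_map, List.map_cons, List.prod_cons, List.map_map]
  simp only [add_zero]
  congr 3
  funext l
  simp only [Function.comp, Nat.succ_eq_add_one]
  congr 1
  omega

theorem flag_key {n : ℕ} (S : Subring R) (hS : ∀ x : R, |x| ≤ 1 → x ∈ S) (m : ℕ)
    (t : ℕ → R)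
    (hdec : ∀ i j : ℕ, i ≤ j → j ≤ m → vge (S : Set R) (t i) (t j))
    (V : ℕ → ℕ → Submodule R (Fin n → R))
    (P : ℕ → ℕ → Matrix (Fin n) (Fin n) R)
    (hP : ∀ k l : ℕ, k ≤ l → l ≤ m → IsOrthProjOnto (V k l) (P k l))
    (hmono : ∀ k l l' : ℕ, k ≤ l → l ≤ l' → l' ≤ m → V k l' ≤ V k l)
    (hΔ : ∀ k l : ℕ, k < l → l ≤ m → Bd S (P k l - P (k + 1) l) (t k) (t l)) :
    ∀ r k j : ℕ, j + r = m → k < j →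
      Bd S ((P k j - P (k + 1) j) * prodP (fun l => P l l) (j + 1) r) (t k) (t m) := by
  intro r
  induction r with
  | zero =>
    intro k j hj hk
    have : prodP (fun l => P l l) (j + 1) 0 = 1 := by simp [prodP]
    rw [this, mul_one]
    obtain rfl : j = m := by omega
    exact hΔ k j hk le_rfl
  | succ r ih =>
    intro k j hj hk
    rw [prodP_succ]
    have key : ∀ d : ℕ, k + 1 + d ≤ j + 1 →
        Bd S ((P k j - P (k + 1) j) * (P (k + 1 + d) (j + 1) *
          prodP (fun l => P l l) (j + 1 + 1) r)) (t k) (t m) := by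
      intro d
      induction d with
      | zero =>
        intro _
        have e1 : P (k + 1) j * P (k + 1) (j + 1) = P (k + 1) (j + 1) :=
          proj_mul (hP _ _ (by omega) (by omega)) (hP _ _ (by omega) (by omega))
            (hmono _ _ _ (by omega) (by omega) (by omega))
        have e2 : P k j * P k (j + 1) = P k (j + 1) :=
          proj_mul (hP _ _ (by omega) (by omega)) (hP _ _ (by omega) (by omega))
            (hmono _ _ _ (by omega) (by omega) (by omega))
        have e : (P k j - P (k + 1) j) * (P (k + 1 + 0) (j + 1) *
            prodP (fun l => P l l) (j + 1 + 1) r) =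
            (1 - P k j) * ((P k (j + 1) - P (k + 1) (j + 1)) *
              prodP (fun l => P l l) (j + 1 + 1) r) := by
          rw [← mul_assoc, ← mul_assoc]
          congr 1
          rw [add_zero, sub_mul, e1, sub_mul, one_mul, mul_sub, e2]
          abel
        rw [e]
        refine Bd.mul_left (fun a b => ?_) (ih k (j + 1) (by omega) (by omega))
        refine S.sub_mem ?_ (hS _ (proj_abs_le (hP _ _ (by omega) (by omega)) a b))
        rw [Matrix.one_apply]
        split_ifs
        exacts [S.one_mem, S.zero_mem]
      | succ d ihd =>
        intro hd
        have e : (P k j - P (k + 1) j) * (P (k + 1 + (d + 1)) (j + 1) *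
            prodP (fun l => P l l) (j + 1 + 1) r) =
            (P k j - P (k + 1) j) * (P (k + 1 + d) (j + 1) *
              prodP (fun l => P l l) (j + 1 + 1) r) +
            -((P k j - P (k + 1) j) * ((P (k + 1 + d) (j + 1) - P (k + 1 + d + 1) (j + 1)) *
              prodP (fun l => P l l) (j + 1 + 1) r)) := by
          rw [sub_mul (P (k + 1 + d) (j + 1)), mul_sub]
          rw [show k + 1 + (d + 1) = k + 1 + d + 1 by omega]
          abel
        rw [e]
        refine (ihd (by omega)).add (Bd.neg ?_)
        exact (hΔ k j hk (by omega)).mul (hdec (k + 1 + d) j (by omega) (by omega))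
          (ih (k + 1 + d) (j + 1) (by omega) (by omega))
    have := key (j - k) (by omega)
    rwa [show k + 1 + (j - k) = j + 1 by omega] at this

end LipStrat

end FlagHelpers

open LipStrat in
/-- Lemma 2.32, the flag lemma. Given `λ₁ ≥ ⋯ ≥ λ_{m+1}` in `Γ`
(represented by nonzero elements `t 0, …, t m` with decreasing valuations) and partial flags
`V_{k,m} ⊆ ⋯ ⊆ V_{k,k} ⊆ R^n` with `Δ(V_{k,ℓ}, V_{k+1,ℓ}) ≥ λ_{k+1} - λ_{ℓ+1}`, one has
`v((1 - P_{0,0}) P_{1,1} ⋯ P_{m,m}) ≥ λ₁ - λ_{m+1}`, and if moreover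
`dim V_{1,1} = dim V_{0,0}` then also
`v((P_{0,0} - P_{1,1}) P_{2,2} ⋯ P_{m,m}) ≥ λ₁ - λ_{m+1}`. -/
theorem flag_lemma
    {R : Type*} [Field R] [LinearOrder R] [IsStrictOrderedRing R] [LipStrat.IsRealClosed R]
    [TopologicalSpace R] [OrderTopology R]
    (L : FirstOrder.Language) [L.Structure R]
    (hring : ExpandsOrderedRing (R := R) L)
    (homin : IsOMinimal (R := R) L)
    (R₀ : L.ElementarySubstructure R) (hproper : (R₀ : Set R) ≠ Set.univ)
    (O : Set R) (hO : O = convexClosure (R₀ : Set R))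
    {n : ℕ} (m : ℕ) (hm : 1 ≤ m)
    -- `λ_{i+1} = v (t i)`, with `λ₁ ≥ λ₂ ≥ ⋯ ≥ λ_{m+1}`
    (t : ℕ → R) (ht : ∀ i : ℕ, i ≤ m → t i ≠ 0)
    (hdec : ∀ i j : ℕ, i ≤ j → j ≤ m → vge O (t i) (t j))
    (V : ℕ → ℕ → Submodule R (Fin n → R))
    (P : ℕ → ℕ → Matrix (Fin n) (Fin n) R)
    (hP : ∀ k l : ℕ, k ≤ l → l ≤ m → IsOrthProjOnto (V k l) (P k l))
    (hmono : ∀ k l l' : ℕ, k ≤ l → l ≤ l' → l' ≤ m → V k l' ≤ V k l)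
    (hdim : ∀ k l : ℕ, k < l → l ≤ m →
      Module.finrank R (V k l) = Module.finrank R (V (k + 1) l))
    (hΔ : ∀ k l : ℕ, k < l → l ≤ m →
      ∀ i j : Fin n, vge O ((P k l - P (k + 1) l) i j * t l) (t k)) :
    (∀ i j : Fin n,
      vge O ((((1 : Matrix (Fin n) (Fin n) R) - P 0 0) *
        prodP (fun l => P l l) 1 m) i j * t m) (t 0)) ∧
    (Module.finrank R (V 1 1) = Module.finrank R (V 0 0) →
      ∀ i j : Fin n,
        vge O (((P 0 0 - P 1 1) * prodP (fun l => P l l) 2 (m - 1)) i j * t m) (t 0)) := by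
  obtain ⟨S, hS, hS1⟩ := exists_subring L hring R₀
  rw [← hS] at hO
  subst hO
  have key := flag_key S hS1 m t hdec V P hP hmono hΔ (m - 1) 0 1 (by omega) (by omega)
  constructor
  · have e2 : P 0 0 * P 0 1 = P 0 1 :=
      proj_mul (hP _ _ (by omega) (by omega)) (hP _ _ (by omega) (by omega))
        (hmono _ _ _ (by omega) (by omega) (by omega))
    have e : ((1 : Matrix (Fin n) (Fin n) R) - P 0 0) * prodP (fun l => P l l) 1 m =
        (P 0 0 - 1) * ((P 0 1 - P (0 + 1) 1) * prodP (fun l => P l l) (1 + 1) (m - 1)) := by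
      obtain ⟨r, rfl⟩ : ∃ r, m = r + 1 := ⟨m - 1, by omega⟩
      rw [prodP_succ, ← mul_assoc, ← mul_assoc]
      congr 1
      rw [zero_add, sub_mul, one_mul, sub_mul, one_mul, mul_sub, e2]
      abel
    rw [e]
    refine Bd.mul_left (fun a b => ?_) key
    refine S.sub_mem (hS1 _ (proj_abs_le (hP _ _ (by omega) (by omega)) a b)) ?_
    rw [Matrix.one_apply]
    split_ifs
    exacts [S.one_mem, S.zero_mem]
  · intro hd
    have hV : V 0 1 = V 0 0 :=
      Submodule.eq_of_le_of_finrank_eq (hmono _ _ _ (by omega) (by omega) (by omega))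
        ((hdim 0 1 (by omega) (by omega)).trans hd)
    have h01 := hP 0 1 (by omega) (by omega)
    rw [hV] at h01
    rw [proj_unique (hP 0 0 (by omega) (by omega)) h01]
    exact key
end
end

section
/- Fix natural numbers n and ℓ. Then for each d ≤ n there is a finite open covering of the Grassmannian Gr_{n,d}(R) by L-definable sets Θ_ν^d such that for any choice of ℓ of these sets Θ_{ν_1}^{d_1},…,Θ_{ν_ℓ}^{d_ℓ} there exists an orthogonal transformation κ ∈ O_n(ℚ) such that for every i ≤ ℓ and every V ∈ Θ_{ν_i}^{d_i} one has v(J(κV)) ≥ 0. -/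
open FirstOrder Matrix Topology Set
open scoped Classical

noncomputable section

set_option linter.unusedSectionVars false

namespace GC

open LipStrat Polynomial

section Definability

variable {R : Type*} [Field R] [LinearOrder R] [IsStrictOrderedRing R]
variable {L : FirstOrder.Language} [L.Structure R] {α : Type*}

theorem def_add (hring : ExpandsOrderedRing (R := R) L) {f g : (α → R) → R}
    (hf : (∅ : Set R).DefinableFun L f) (hg : (∅ : Set R).DefinableFun L g) :
    (∅ : Set R).DefinableFun L (fun v => f v + g v) := by
  have hadd : (∅ : Set R).DefinableFun L (fun v : Fin 2 → R => v 0 + v 1) :=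
    hring.add_def.preimage_comp (![some 0, some 1, none] : Fin 3 → Option (Fin 2))
  have hm : (∅ : Set R).DefinableMap L (fun v => ![f v, g v]) := by
    simp [Set.DefinableMap, *]
  exact Set.DefinableFun.comp hm hadd

theorem def_mul (hring : ExpandsOrderedRing (R := R) L) {f g : (α → R) → R}
    (hf : (∅ : Set R).DefinableFun L f) (hg : (∅ : Set R).DefinableFun L g) :
    (∅ : Set R).DefinableFun L (fun v => f v * g v) := by
  have hmul : (∅ : Set R).DefinableFun L (fun v : Fin 2 → R => v 0 * v 1) :=
    hring.mul_def.preimage_comp (![some 0, some 1, none] : Fin 3 → Option (Fin 2))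
  have hm : (∅ : Set R).DefinableMap L (fun v => ![f v, g v]) := by
    simp [Set.DefinableMap, *]
  exact Set.DefinableFun.comp hm hmul

theorem def_lt (hring : ExpandsOrderedRing (R := R) L) {f g : (α → R) → R}
    (hf : (∅ : Set R).DefinableFun L f) (hg : (∅ : Set R).DefinableFun L g) :
    (∅ : Set R).Definable L {v | f v < g v} := by
  have hm : (∅ : Set R).DefinableMap L (fun v => ![f v, g v]) := by
    simp [Set.DefinableMap, *]
  exact Set.Definable.preimage_map hm hring.lt_def

theorem def_zero (hring : ExpandsOrderedRing (R := R) L) :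
    (∅ : Set R).DefinableFun L (fun _ : α → R => (0 : R)) := by
  have h := Set.DefinableFun.ofPred_eq (L := L) (A := (∅ : Set R)) (α := Option α)
    (f := fun v => v none + v none) (g := fun v => v none)
    (def_add hring (L.definableFun_var none) (L.definableFun_var none)) (L.definableFun_var none)
  unfold Set.DefinableFun
  convert h using 1
  ext v
  simp [Function.tupleGraph, eq_comm]

theorem def_one (hring : ExpandsOrderedRing (R := R) L) :
    (∅ : Set R).DefinableFun L (fun _ : α → R => (1 : R)) := by
  have h := Set.DefinableFun.ofPred_eq (L := L) (A := (∅ : Set R)) (α := Option α)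
    (f := fun v => v none * v none) (g := fun v => v none)
    (def_mul hring (L.definableFun_var none) (L.definableFun_var none)) (L.definableFun_var none)
  have h2 := (Set.DefinableFun.ofPred_eq (L := L) (A := (∅ : Set R)) (α := Option α)
    (f := fun v => v none) (g := fun v => 0) (L.definableFun_var none) (def_zero hring)).compl
  unfold Set.DefinableFun
  convert h.inter h2 using 1
  ext v
  simp only [Function.tupleGraph, Set.mem_inter_iff, Set.mem_compl_iff, Set.mem_ofPred_eq]
  constructor
  · intro h; simp [← h]
  · rintro ⟨h1, h2⟩
    exact (mul_left_cancel₀ h2 (by rw [h1, mul_one])).symm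

theorem def_neg (hring : ExpandsOrderedRing (R := R) L) {f : (α → R) → R}
    (hf : (∅ : Set R).DefinableFun L f) :
    (∅ : Set R).DefinableFun L (fun v => - f v) := by
  have h0 : (∅ : Set R).DefinableFun L (fun v : Fin 1 → R => - v 0) := by
    have h := Set.DefinableFun.ofPred_eq (L := L) (A := (∅ : Set R)) (α := Option (Fin 1))
      (f := fun v => v (some 0) + v none) (g := fun v => 0)
      (def_add hring (L.definableFun_var _) (L.definableFun_var none)) (def_zero hring)
    unfold Set.DefinableFun
    convert h using 1
    ext v
    simp only [Function.tupleGraph, Set.mem_ofPred_eq, Function.comp_apply]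
    constructor
    · intro h; rw [← h]; ring
    · intro h; linear_combination -h
  have hm : (∅ : Set R).DefinableMap L (fun v => ![f v]) := by
    simp [Set.DefinableMap, *]
  exact Set.DefinableFun.comp hm h0

theorem def_nat (hring : ExpandsOrderedRing (R := R) L) (k : ℕ) :
    (∅ : Set R).DefinableFun L (fun _ : α → R => (k : R)) := by
  induction k with
  | zero => simpa using def_zero hring
  | succ k ih => simpa using def_add hring ih (def_one hring)

theorem def_int (hring : ExpandsOrderedRing (R := R) L) (k : ℤ) :
    (∅ : Set R).DefinableFun L (fun _ : α → R => (k : R)) := by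
  obtain ⟨k, rfl | rfl⟩ := k.eq_nat_or_neg
  · simpa using def_nat hring k
  · simpa using def_neg hring (def_nat hring k)

theorem def_rat (hring : ExpandsOrderedRing (R := R) L) (q : ℚ) :
    (∅ : Set R).DefinableFun L (fun _ : α → R => (q : R)) := by
  have h := Set.DefinableFun.ofPred_eq (L := L) (A := (∅ : Set R)) (α := Option α)
    (f := fun v => (q.den : R) * v none) (g := fun v => (q.num : R))
    (def_mul hring (def_nat hring _) (L.definableFun_var none)) (def_int hring _)
  unfold Set.DefinableFun
  convert h using 1
  ext v
  simp only [Function.tupleGraph, Set.mem_ofPred_eq]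
  have hq : (q : R) = q.num / q.den := by exact_mod_cast (Rat.num_div_den q).symm
  have hd : (q.den : R) ≠ 0 := by exact_mod_cast q.den_nz
  rw [hq, div_eq_iff hd, mul_comm, eq_comm]

theorem def_sum (hring : ExpandsOrderedRing (R := R) L) {ι : Type*} (s : Finset ι)
    {f : ι → (α → R) → R} (hf : ∀ i, (∅ : Set R).DefinableFun L (f i)) :
    (∅ : Set R).DefinableFun L (fun v => ∑ i ∈ s, f i v) := by
  induction s using Finset.induction_on with
  | empty => simpa using def_zero hring
  | insert a s ha ih => simpa [Finset.sum_insert ha] using def_add hring (hf a) ih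

theorem def_prod (hring : ExpandsOrderedRing (R := R) L) {ι : Type*} (s : Finset ι)
    {f : ι → (α → R) → R} (hf : ∀ i, (∅ : Set R).DefinableFun L (f i)) :
    (∅ : Set R).DefinableFun L (fun v => ∏ i ∈ s, f i v) := by
  induction s using Finset.induction_on with
  | empty => simpa using def_one hring
  | insert a s ha ih => simpa [Finset.prod_insert ha] using def_mul hring (hf a) ih

theorem def_det (hring : ExpandsOrderedRing (R := R) L) {d : ℕ}
    {f : (α → R) → Matrix (Fin d) (Fin d) R}
    (hf : ∀ i j, (∅ : Set R).DefinableFun L (fun v => f v i j)) :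
    (∅ : Set R).DefinableFun L (fun v => (f v).det) := by
  simp only [Matrix.det_apply']
  exact def_sum hring _ fun σ => def_mul hring (def_int hring _)
    (def_prod hring _ fun i => hf _ _)

theorem nat_mem_O (hring : ExpandsOrderedRing (R := R) L) (R₀ : L.ElementarySubstructure R)
    (k : ℕ) (x : R) (hx : |x| ≤ k) : x ∈ convexClosure (R₀ : Set R) := by
  have hdef : (∅ : Set R).Definable L {v : Fin 1 → R | (k : R) < v 0} :=
    def_lt hring (def_nat hring k) (L.definableFun_var 0)
  obtain ⟨b, hb1, hb2⟩ := R₀.meetsDefinable {x : R | (k : R) < x} ⟨k + 1, by simp⟩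
    (by exact hdef.mono (Set.empty_subset _))
  have hb2' : (k : R) < b := by first | exact hb2 | exact hb1
  exact ⟨b, by first | exact hb1 | exact hb2, by linarith [neg_abs_le x], by linarith [le_abs_self x]⟩

end Definability

/-- elements bounded by a natural number -/
def finSub (R : Type*) [Field R] [LinearOrder R] [IsStrictOrderedRing R] : Subring R where
  carrier := {x | ∃ k : ℕ, |x| ≤ k}
  mul_mem' := by
    rintro a b ⟨k, hk⟩ ⟨l, hl⟩
    refine ⟨k * l, ?_⟩
    rw [abs_mul]; push_cast
    exact mul_le_mul hk hl (abs_nonneg _) (by positivity)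
  one_mem' := ⟨1, by simp⟩
  add_mem' := by
    rintro a b ⟨k, hk⟩ ⟨l, hl⟩
    refine ⟨k + l, ?_⟩
    push_cast
    exact (abs_add_le a b).trans (add_le_add hk hl)
  zero_mem' := ⟨0, by simp⟩
  neg_mem' := by
    rintro a ⟨k, hk⟩
    exact ⟨k, by simpa using hk⟩

section Curve

/-- There is a polynomial curve of (scaled) orthogonal matrices passing at `t i` through a scaled
signed permutation matrix of `σ i`. -/
def CurveGood {n : ℕ} {ι : Type*} (t : ι → ℚ) (σ : ι → Equiv.Perm (Fin n)) : Prop :=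
  ∃ (M : Matrix (Fin n) (Fin n) ℚ[X]) (q : ℚ[X]), M * Mᵀ = (q ^ 2) • 1 ∧ Mᵀ * M = (q ^ 2) • 1 ∧
    q ≠ 0 ∧ ∀ i, ∃ w : Fin n → ℚ, (∀ a, w a ≠ 0) ∧
      ∀ a b, (M a b).eval (t i) = if σ i a = b then w a else 0

theorem curve_one {n : ℕ} {ι : Type*} (t : ι → ℚ) :
    CurveGood t (1 : ι → Equiv.Perm (Fin n)) := by
  refine ⟨1, 1, by simp, by simp, one_ne_zero, fun i => ⟨fun _ => 1, by simp, fun a b => ?_⟩⟩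
  by_cases h : a = b <;> simp [Matrix.one_apply, h]

theorem curve_mul {n : ℕ} {ι : Type*} (t : ι → ℚ) {σ τ : ι → Equiv.Perm (Fin n)}
    (hσ : CurveGood t σ) (hτ : CurveGood t τ) : CurveGood t (σ * τ) := by
  obtain ⟨M, q, h1, h2, h3, h4⟩ := hσ
  obtain ⟨M', q', h1', h2', h3', h4'⟩ := hτ
  refine ⟨M' * M, q' * q, ?_, ?_, mul_ne_zero h3' h3, fun i => ?_⟩
  · rw [Matrix.transpose_mul, Matrix.mul_assoc, ← Matrix.mul_assoc M, h1]
    simp only [Matrix.smul_mul, Matrix.mul_smul, Matrix.one_mul, h1', smul_smul]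
    congr 1; ring
  · rw [Matrix.transpose_mul, Matrix.mul_assoc, ← Matrix.mul_assoc M'ᵀ, h2']
    simp only [Matrix.smul_mul, Matrix.mul_smul, Matrix.one_mul, h2, smul_smul]
    congr 1; ring
  · obtain ⟨w, hw, hM⟩ := h4 i
    obtain ⟨w', hw', hM'⟩ := h4' i
    refine ⟨fun a => w' a * w (τ i a), fun a => mul_ne_zero (hw' _) (hw _), fun a b => ?_⟩
    simp only [Matrix.mul_apply, Polynomial.eval_finsetSum, Polynomial.eval_mul, hM, hM']
    rw [Finset.sum_eq_single (τ i a)]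
    · by_cases hb : σ i (τ i a) = b <;> simp [hb]
    · intro x _ hx
      simp [hx.symm]
    · simp

theorem curve_swap {n : ℕ} {ι : Type*} [Finite ι] [DecidableEq ι] (t : ι → ℚ)
    (ht : Function.Injective t)
    (i₀ : ι) (x y : Fin n) (hxy : x ≠ y) :
    CurveGood t (Pi.mulSingle i₀ (Equiv.swap x y) : ι → Equiv.Perm (Fin n)) := by
  have hu : ∀ a : Fin n, ∃ u : ℚ[X], ∀ i, u.eval (t i) =
      if i = i₀ then (if a = x then 1 else 0) - (if a = y then 1 else 0)
      else if a = x then 1 else 0 := fun a =>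
    (Polynomial.exists_eval_eq_iff _ _).2 fun i j hij => by rw [ht hij]
  choose u hu using hu
  set q : ℚ[X] := u ⬝ᵥ u with hq
  have hqe : ∀ i, q.eval (t i) = if i = i₀ then 2 else 1 := by
    intro i
    simp only [hq, dotProduct, Polynomial.eval_finsetSum, Polynomial.eval_mul, hu]
    by_cases hi : i = i₀
    · simp only [hi, if_true, sub_mul, mul_sub, Finset.sum_sub_distrib]
      simp [hxy, hxy.symm]; norm_num
    · simp [hi]
  set M : Matrix (Fin n) (Fin n) ℚ[X] := q • 1 - (2 : ℚ[X]) • vecMulVec u u with hM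
  have hMt : Mᵀ = M := by
    simp [hM, Matrix.transpose_sub, Matrix.transpose_smul, Matrix.transpose_vecMulVec]
  have hMM : M * M = (q ^ 2) • 1 := by
    have hv : vecMulVec u u * vecMulVec u u = q • vecMulVec u u := by
      rw [Matrix.vecMulVec_mul_vecMulVec, hq, Matrix.vecMulVec_smul]
    simp only [hM, Matrix.sub_mul, Matrix.mul_sub, Matrix.smul_mul, Matrix.mul_smul,
      Matrix.one_mul, Matrix.mul_one, hv]
    module
  refine ⟨M, q, by rw [hMt, hMM], by rw [hMt, hMM], ?_, fun i => ?_⟩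
  · intro h0
    have := hqe i₀
    simp [h0] at this
  · by_cases hi : i = i₀
    · refine ⟨fun _ => 2, by simp, fun a b => ?_⟩
      subst hi
      have e1 : (M a b).eval (t i) = (if a = b then 2 else 0) - 2 * (
        ((if a = x then 1 else 0) - (if a = y then 1 else 0)) *
        ((if b = x then 1 else 0) - (if b = y then 1 else 0))) := by
        simp only [hM, Matrix.sub_apply, Matrix.smul_apply, Matrix.one_apply, smul_eq_mul,
          Matrix.vecMulVec_apply, Polynomial.eval_sub, Polynomial.eval_mul, hu, hqe, if_true]
        by_cases hab : a = b <;> simp [hab]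
      rw [e1, Pi.mulSingle_eq_same, Equiv.swap_apply_def]
      grind
    · refine ⟨fun a => if a = x then -1 else 1, by intro a; dsimp only; split_ifs <;> norm_num, fun a b => ?_⟩
      have e1 : (M a b).eval (t i) = (if a = b then 1 else 0) - 2 * (
        (if a = x then 1 else 0) * (if b = x then 1 else 0)) := by
        simp only [hM, Matrix.sub_apply, Matrix.smul_apply, Matrix.one_apply, smul_eq_mul,
          Matrix.vecMulVec_apply, Polynomial.eval_sub, Polynomial.eval_mul, hu, hqe, hi, if_false]
        by_cases hab : a = b <;> simp [hab]
      rw [e1, Pi.mulSingle_eq_of_ne hi]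
      simp only [Equiv.Perm.one_apply]
      grind

theorem curve_all {n : ℕ} {ι : Type*} [Finite ι] (t : ι → ℚ)
    (ht : Function.Injective t) (σ : ι → Equiv.Perm (Fin n)) : CurveGood t σ := by
  classical
  let H : Submonoid (ι → Equiv.Perm (Fin n)) :=
    { carrier := {σ | CurveGood t σ}
      mul_mem' := fun h1 h2 => curve_mul t h1 h2
      one_mem' := curve_one t }
  change σ ∈ H
  refine Submonoid.pi_mem_of_mulSingle_mem σ fun i => ?_
  generalize σ i = τ
  induction τ using Equiv.Perm.swap_induction_on with
  | one => rw [Pi.mulSingle_one]; exact H.one_mem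
  | swap_mul f x y hxy ih =>
    rw [Pi.mulSingle_mul]
    exact H.mul_mem (curve_swap t ht i x y hxy) ih

end Curve

section Core

variable {R : Type*} [Field R] [LinearOrder R] [IsStrictOrderedRing R]

/-- The quantitative transversality condition. -/
def Good (ε : ℚ) {n d : ℕ} (κ : Matrix (Fin n) (Fin n) ℚ) (h : d ≤ n)
    (A : Matrix (Fin n) (Fin d) R) : Prop :=
  ∀ J : Fin d → Fin n, |(ε : R) * (A.submatrix J id).det| <
    |((κ.map (fun q : ℚ => (q : R)) * A).submatrix (Fin.castLE h) id).det|

theorem exists_minor {n d : ℕ} (A : Matrix (Fin n) (Fin d) R)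
    (hA : LinearIndependent R (fun j : Fin d => fun i : Fin n => A i j)) :
    ∃ J : Fin d → Fin n, (A.submatrix J id).det ≠ 0 := by
  have hA' : LinearIndependent R A.col := hA
  have hrank : A.rank = d := by simpa using hA'.rank_matrix
  obtain ⟨κ, a, ha, hspan, hli⟩ := exists_linearIndependent' R A.row
  have hfin : Finite κ := Finite.of_injective a ha
  have := Fintype.ofFinite κ
  have hcard : Fintype.card κ = d := by
    rw [← finrank_span_eq_card hli, hspan, ← Matrix.rank_eq_finrank_span_row, hrank]
  let e : Fin d ≃ κ := (Fintype.equivFinOfCardEq hcard).symm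
  refine ⟨a ∘ e, ?_⟩
  have h2 : LinearIndependent R (A.submatrix (a ∘ e) id).row := hli.comp e e.injective
  rw [Matrix.linearIndependent_rows_iff_isUnit, Matrix.isUnit_iff_isUnit_det] at h2
  exact h2.ne_zero

theorem exists_max_minor {n d : ℕ} (A : Matrix (Fin n) (Fin d) R)
    (hA : LinearIndependent R (fun j : Fin d => fun i : Fin n => A i j)) :
    ∃ J : Fin d → Fin n, (A.submatrix J id).det ≠ 0 ∧
      ∀ J' : Fin d → Fin n, |(A.submatrix J' id).det| ≤ |(A.submatrix J id).det| := by
  obtain ⟨J₀, hJ₀⟩ := exists_minor A hA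
  obtain ⟨J, -, hJ⟩ := Finset.exists_max_image (Finset.univ : Finset (Fin d → Fin n))
    (fun J => |(A.submatrix J id).det|) ⟨J₀, Finset.mem_univ _⟩
  refine ⟨J, ?_, fun J' => hJ J' (Finset.mem_univ _)⟩
  intro h0
  have := hJ J₀ (Finset.mem_univ _)
  rw [h0, abs_zero] at this
  exact hJ₀ (abs_eq_zero.1 (le_antisymm this (abs_nonneg _)))

theorem natDegree_det_le' {d e : ℕ} (P : Matrix (Fin d) (Fin d) R[X])
    (hP : ∀ i j, (P i j).natDegree ≤ e) : P.det.natDegree ≤ d * e := by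
  rw [Matrix.det_apply]
  refine Polynomial.natDegree_sum_le_of_forall_le _ _ fun σ _ => ?_
  refine (Polynomial.natDegree_smul_le _ _).trans ?_
  refine (Polynomial.natDegree_prod_le _ _).trans ?_
  refine (Finset.sum_le_sum fun i _ => hP _ _).trans ?_
  simp

theorem lagrange_cast {ι : Type*} [DecidableEq ι] (S : Finset ι) (v : ι → ℚ) (i : ι) (x : ℚ) :
    (Lagrange.basis S (fun k => (v k : R)) i).eval (x : R) =
      (((Lagrange.basis S v i).eval x : ℚ) : R) := by
  simp [Lagrange.basis, Lagrange.basisDivisor, Polynomial.eval_prod]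

theorem eval_map_cast (p : ℚ[X]) (x : ℚ) :
    (p.map (algebraMap ℚ R)).eval (x : R) = ((p.eval x : ℚ) : R) := by
  have := Polynomial.eval_map_apply (f := algebraMap ℚ R) (p := p) x
  simpa using this

theorem exists_eps {τ : Type*} [Finite τ] (a b : τ → ℚ) (hb : ∀ x, 0 < b x) :
    ∃ ε : ℚ, 0 < ε ∧ ∀ x, ε * a x < b x := by
  have h : ∀ᶠ ε : ℚ in 𝓝[>] 0, 0 < ε ∧ ∀ x, ε * a x < b x := by
    refine (eventually_mem_nhdsWithin).and (Filter.eventually_all.2 fun x => ?_)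
    have hc : Filter.Tendsto (fun ε : ℚ => ε * a x) (𝓝[>] 0) (𝓝 (0 * a x)) :=
      ((continuous_id.mul continuous_const).tendsto 0).mono_left nhdsWithin_le_nhds
    rw [zero_mul] at hc
    exact hc.eventually (gt_mem_nhds (hb x))
  exact h.exists

theorem exists_perm_extend {n d : ℕ} (h : d ≤ n) (J : Fin d → Fin n) (hJ : Function.Injective J) :
    ∃ σ : Equiv.Perm (Fin n), ∀ i, σ (Fin.castLE h i) = J i := by
  have := Equiv.Perm.isMultiplyPretransitive (Fin n) d
  obtain ⟨g, hg⟩ := MulAction.exists_smul_eq (Equiv.Perm (Fin n))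
    (⟨Fin.castLE h, Fin.castLE_injective h⟩ : Fin d ↪ Fin n) ⟨J, hJ⟩
  refine ⟨g, fun i => ?_⟩
  have := congrArg (fun f : Fin d ↪ Fin n => f i) hg
  simpa using this

theorem core (R : Type*) [Field R] [LinearOrder R] [IsStrictOrderedRing R] (n ℓ : ℕ) :
    ∃ (N m : ℕ) (F : Fin N → Matrix (Fin n) (Fin n) ℚ) (ε : ℚ), 0 < ε ∧ m * (ℓ + 1) < N ∧
      (∀ k, F k * (F k)ᵀ = 1 ∧ (F k)ᵀ * F k = 1) ∧
      ∀ (d : ℕ) (h : d ≤ n) (A : Matrix (Fin n) (Fin d) R),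
        LinearIndependent R (fun j : Fin d => fun i : Fin n => A i j) →
        (Finset.univ.filter fun k => ¬ Good ε (F k) h A).card ≤ m := by
  let t : Equiv.Perm (Fin n) → ℚ := fun σ => ((Fintype.equivFin _ σ : ℕ) : ℚ)
  have ht : Function.Injective t := fun a b hab => by
    apply (Fintype.equivFin (Equiv.Perm (Fin n))).injective
    apply Fin.ext
    have hab' : ((Fintype.equivFin (Equiv.Perm (Fin n)) a : ℕ) : ℚ)
      = ((Fintype.equivFin (Equiv.Perm (Fin n)) b : ℕ) : ℚ) := hab
    exact_mod_cast hab'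
  obtain ⟨M, q, hM1, hM2, hq, hw⟩ := curve_all t ht (fun σ : Equiv.Perm (Fin n) => σ)
  choose w hw0 hw using hw
  let e : ℕ := Finset.univ.sup fun p : Fin n × Fin n => (M p.1 p.2).natDegree
  have he : ∀ a b, (M a b).natDegree ≤ e := fun a b =>
    Finset.le_sup (f := fun p : Fin n × Fin n => (M p.1 p.2).natDegree) (Finset.mem_univ (a, b))
  let m := n * e
  let N := m * (ℓ + 1) + 1
  have hinf : ({x : ℚ | q.IsRoot x}ᶜ).Infinite :=
    (Polynomial.finite_setOfPred_isRoot hq).infinite_compl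
  let s : Fin N → ℚ := fun k => (hinf.natEmbedding _ k : ℚ)
  have hs : Function.Injective s := fun a b hab =>
    Fin.ext ((hinf.natEmbedding _).injective (Subtype.ext hab))
  have hqs : ∀ k, q.eval (s k) ≠ 0 := fun k => (hinf.natEmbedding _ k).2
  let F : Fin N → Matrix (Fin n) (Fin n) ℚ := fun k => (q.eval (s k))⁻¹ • M.map (eval (s k))
  have hmapmul : ∀ (x : ℚ) (P Q : Matrix (Fin n) (Fin n) ℚ[X]),
      (P * Q).map (eval x) = P.map (eval x) * Q.map (eval x) := fun x P Q => by
    simpa using Matrix.map_mul (f := evalRingHom x) (L := P) (M := Q)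
  obtain ⟨ε, hε, hεb⟩ := exists_eps (τ := Finset (Fin N) × Equiv.Perm (Fin n) × Fin (n + 1))
    (fun p => ∑ i ∈ p.1, |q.eval (s i)| ^ (p.2.2 : ℕ) *
      |(Lagrange.basis p.1 s i).eval (t p.2.1)|)
    (fun p => ∏ a : Fin (p.2.2 : ℕ), |w p.2.1 (Fin.castLE (Nat.lt_succ_iff.1 p.2.2.2) a)|)
    (fun p => Finset.prod_pos fun a _ => abs_pos.2 (hw0 _ _))
  have hsm : ∀ x : ℚ, ((q ^ 2) • (1 : Matrix (Fin n) (Fin n) ℚ[X])).map (eval x)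
      = (q.eval x) ^ 2 • 1 := fun x => by
    ext a b
    by_cases hab : a = b <;> simp [Matrix.one_apply, hab]
  refine ⟨N, m, F, ε, hε, Nat.lt_succ_self _, fun k => ⟨?_, ?_⟩, ?_⟩
  · have := congrArg (fun P => Matrix.map P (eval (s k))) hM1
    simp only [hmapmul, hsm, Matrix.transpose_map] at this
    simp only [F, Matrix.transpose_smul, Matrix.smul_mul, Matrix.mul_smul, Matrix.transpose_map,
      this, smul_smul]
    have : (eval (s k) q)⁻¹ * ((eval (s k) q)⁻¹ * eval (s k) q ^ 2) = 1 := by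
      field_simp [hqs k]
    rw [this, one_smul]
  · have := congrArg (fun P => Matrix.map P (eval (s k))) hM2
    simp only [hmapmul, hsm, Matrix.transpose_map] at this
    simp only [F, Matrix.transpose_smul, Matrix.smul_mul, Matrix.mul_smul, Matrix.transpose_map,
      this, smul_smul]
    have : (eval (s k) q)⁻¹ * ((eval (s k) q)⁻¹ * eval (s k) q ^ 2) = 1 := by
      field_simp [hqs k]
    rw [this, one_smul]
  · intro d h A hA
    by_contra hcon
    push Not at hcon
    obtain ⟨S, hSsub, hScard⟩ := Finset.exists_subset_card_eq (Nat.succ_le_of_lt hcon)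
    obtain ⟨J, hJ0, hJmax⟩ := exists_max_minor A hA
    have hJinj : Function.Injective J := by
      intro a b hab
      by_contra hne
      exact hJ0 (Matrix.det_zero_of_row_eq hne (by ext j; simp [hab]))
    obtain ⟨σ, hσ⟩ := exists_perm_extend h J hJinj
    set D : R := |(A.submatrix J id).det| with hD
    have hDpos : 0 < D := abs_pos.2 hJ0
    let f : R[X] := ((M.map (Polynomial.map (algebraMap ℚ R)) * A.map C).submatrix
      (Fin.castLE h) id).det
    have hfdeg : f.natDegree ≤ d * e := by
      refine natDegree_det_le' _ fun i j => ?_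
      simp only [Matrix.submatrix_apply, Matrix.mul_apply, Matrix.map_apply]
      refine Polynomial.natDegree_sum_le_of_forall_le _ _ fun k _ => ?_
      refine (Polynomial.natDegree_mul_C_le _ _).trans ?_
      exact (Polynomial.natDegree_map_le).trans (he _ _)
    have hfe : ∀ x : ℚ, f.eval (x : R) = (((M.map (eval x)).map (fun q : ℚ => (q : R)) * A).submatrix
        (Fin.castLE h) id).det := by
      intro x
      have h1 := RingHom.map_det (Polynomial.evalRingHom (x : R))
        ((M.map (Polynomial.map (algebraMap ℚ R)) * A.map C).submatrix (Fin.castLE h) id)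
      rw [Polynomial.coe_evalRingHom] at h1
      rw [h1]
      congr 1
      ext i j
      simp only [Matrix.submatrix_apply, RingHom.mapMatrix_apply, Matrix.map_apply,
        Matrix.mul_apply, Polynomial.coe_evalRingHom, Polynomial.eval_finsetSum,
        Polynomial.eval_mul, Polynomial.eval_C, eval_map_cast]
    have hfs : ∀ k ∈ S, |f.eval (s k : R)| ≤ ε * ((|q.eval (s k)| ^ d : ℚ) : R) * D := by
      intro k hk
      have hbad := (Finset.mem_filter.1 (hSsub hk)).2
      unfold Good at hbad
      push Not at hbad
      obtain ⟨J', hJ'⟩ := hbad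
      have h1 : f.eval (s k : R) = ((q.eval (s k) : ℚ) : R) ^ d *
          (((F k).map (fun q : ℚ => (q : R)) * A).submatrix (Fin.castLE h) id).det := by
        rw [hfe]
        have h2 : ((M.map (eval (s k))).map (fun q : ℚ => (q : R)) * A).submatrix
            (Fin.castLE h) id = ((q.eval (s k) : ℚ) : R) •
            (((F k).map (fun q : ℚ => (q : R)) * A).submatrix (Fin.castLE h) id) := by
          ext i j
          have hqk : ((q.eval (s k) : ℚ) : R) ≠ 0 := by exact_mod_cast hqs k
          simp only [F, Matrix.submatrix_apply, Matrix.mul_apply, Matrix.map_apply,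
            Matrix.smul_apply, smul_eq_mul, Finset.mul_sum]
          refine Finset.sum_congr rfl fun l _ => ?_
          push_cast
          field_simp
        rw [h2, Matrix.det_smul, Fintype.card_fin]
      rw [h1, abs_mul, abs_pow]
      have h3 : |((q.eval (s k) : ℚ) : R)| ^ d = ((|q.eval (s k)| ^ d : ℚ) : R) := by push_cast; rfl
      rw [h3]
      have h4 : |(((F k).map (fun q : ℚ => (q : R)) * A).submatrix (Fin.castLE h) id).det|
          ≤ ε * D := by
        refine hJ'.trans ?_
        have hε' : (0 : R) < ε := by exact_mod_cast hε
        rw [abs_mul, abs_of_pos hε']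
        exact mul_le_mul_of_nonneg_left (hJmax J') hε'.le
      calc _ ≤ ((|q.eval (s k)| ^ d : ℚ) : R) * (ε * D) := by
            refine mul_le_mul_of_nonneg_left h4 ?_
            exact_mod_cast (by positivity : (0 : ℚ) ≤ |q.eval (s k)| ^ d)
        _ = _ := by ring
    have hft : f.eval (t σ : R) = ((∏ a : Fin d, w σ (Fin.castLE h a) : ℚ) : R) *
        (A.submatrix J id).det := by
      rw [hfe]
      have h2 : ((M.map (eval (t σ))).map (fun q : ℚ => (q : R)) * A).submatrix (Fin.castLE h) id
          = Matrix.of fun i j => ((w σ (Fin.castLE h i) : ℚ) : R) * (A.submatrix J id) i j := by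
        ext i j
        simp only [Matrix.submatrix_apply, Matrix.mul_apply, Matrix.map_apply, hw, Matrix.of_apply]
        rw [Finset.sum_eq_single (J i)]
        · simp [hσ]
        · intro b _ hb
          rw [hσ, if_neg hb.symm]; simp
        · simp
      rw [h2, Matrix.det_mul_column]
      push_cast
      rfl
    have hlag : f.eval (t σ : R) = ∑ i ∈ S, f.eval (s i : R) *
        (((Lagrange.basis S s i).eval (t σ) : ℚ) : R) := by
      have hinj : Set.InjOn (fun k => (s k : R)) S := fun a _ b _ hab => hs (by
        dsimp only at hab
        exact_mod_cast hab)
      have hdeg : f.degree < S.card := by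
        refine lt_of_le_of_lt Polynomial.degree_le_natDegree ?_
        rw [hScard]
        have : d * e ≤ n * e := Nat.mul_le_mul_right _ h
        exact_mod_cast Nat.lt_succ_of_le (hfdeg.trans this)
      have h1 := Lagrange.eq_interpolate hinj hdeg
      conv_lhs => rw [h1]
      rw [Lagrange.interpolate_apply, Polynomial.eval_finsetSum]
      refine Finset.sum_congr rfl fun i _ => ?_
      rw [Polynomial.eval_mul, Polynomial.eval_C, lagrange_cast]
    have hup : |f.eval (t σ : R)| ≤ ((ε * ∑ i ∈ S, |q.eval (s i)| ^ d *
        |(Lagrange.basis S s i).eval (t σ)| : ℚ) : R) * D := by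
      rw [hlag]
      refine (Finset.abs_sum_le_sum_abs _ _).trans ?_
      push_cast
      rw [Finset.mul_sum, Finset.sum_mul]
      refine Finset.sum_le_sum fun i hi => ?_
      rw [abs_mul]
      refine (mul_le_mul_of_nonneg_right (hfs i hi) (abs_nonneg _)).trans (le_of_eq ?_)
      push_cast
      ring
    have hlow : |f.eval (t σ : R)| = ((∏ a : Fin d, |w σ (Fin.castLE h a)| : ℚ) : R) * D := by
      rw [hft, abs_mul]
      push_cast
      rw [Finset.abs_prod]
    have hfin := hεb (S, σ, ⟨d, Nat.lt_succ_of_le h⟩)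
    dsimp only at hfin
    rw [hlow] at hup
    have := le_of_mul_le_mul_right hup hDpos
    have h5 : (∏ a : Fin d, |w σ (Fin.castLE h a)|) ≤ ε * ∑ i ∈ S, |q.eval (s i)| ^ d *
        |(Lagrange.basis S s i).eval (t σ)| := by exact_mod_cast this
    exact absurd hfin (not_lt.2 h5)

end Core

section Graph

variable {R : Type*} [Field R] [LinearOrder R] [IsStrictOrderedRing R]

theorem good_det_ne {ε : ℚ} {n d : ℕ} {κ : Matrix (Fin n) (Fin n) ℚ} {h : d ≤ n}
    {A : Matrix (Fin n) (Fin d) R} (hG : Good ε κ h A) :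
    ((κ.map (fun q : ℚ => (q : R)) * A).submatrix (Fin.castLE h) id).det ≠ 0 :=
  abs_pos.1 (lt_of_le_of_lt (abs_nonneg _) (hG (Fin.castLE h)))

theorem good_li {ε : ℚ} {n d : ℕ} {κ : Matrix (Fin n) (Fin n) ℚ} {h : d ≤ n}
    {A : Matrix (Fin n) (Fin d) R} (hG : Good ε κ h A) :
    LinearIndependent R (fun j : Fin d => fun i : Fin n => A i j) := by
  change LinearIndependent R A.col
  rw [← Matrix.mulVec_injective_iff]
  have hu : IsUnit ((κ.map (fun q : ℚ => (q : R)) * A).submatrix (Fin.castLE h) id) :=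
    (Matrix.isUnit_iff_isUnit_det _).2 (isUnit_iff_ne_zero.2 (good_det_ne hG))
  have hinj := Matrix.mulVec_injective_of_isUnit hu
  intro c c' hc
  apply hinj
  have h1 : ∀ c, ((κ.map (fun q : ℚ => (q : R)) * A).submatrix (Fin.castLE h) id) *ᵥ c =
      fun i => (κ.map (fun q : ℚ => (q : R)) *ᵥ (A *ᵥ c)) (Fin.castLE h i) := by
    intro c
    rw [Matrix.mulVec_mulVec]
    rfl
  have hc' : A *ᵥ c = A *ᵥ c' := hc
  rw [h1, h1, hc']

theorem mem_span_cols {n d : ℕ} (A : Matrix (Fin n) (Fin d) R) (x : Fin n → R) :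
    x ∈ Submodule.span R (Set.range fun j : Fin d => fun i : Fin n => A i j) ↔
      ∃ c : Fin d → R, A *ᵥ c = x := by
  have : Submodule.span R (Set.range fun j : Fin d => fun i : Fin n => A i j)
      = LinearMap.range A.mulVecLin := (Matrix.range_mulVecLin A).symm
  rw [this]
  rfl

theorem good_of_span_eq {ε : ℚ} {n d : ℕ} {κ : Matrix (Fin n) (Fin n) ℚ} {h : d ≤ n}
    {A A' : Matrix (Fin n) (Fin d) R} (hG : Good ε κ h A)
    (hA' : LinearIndependent R (fun j : Fin d => fun i : Fin n => A' i j))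
    (hspan : Submodule.span R (Set.range fun j : Fin d => fun i : Fin n => A' i j) =
      Submodule.span R (Set.range fun j : Fin d => fun i : Fin n => A i j)) :
    Good ε κ h A' := by
  have h1 : ∀ j, ∃ c : Fin d → R, A *ᵥ c = fun i => A' i j := fun j => by
    rw [← mem_span_cols, ← hspan]
    exact Submodule.subset_span ⟨j, rfl⟩
  choose g hg using h1
  have hAg : A' = A * (Matrix.of g)ᵀ := by
    ext i j
    have := congrFun (hg j) i
    rw [← this]
    rfl
  have hsub : ∀ (J : Fin d → Fin n) (B : Matrix (Fin n) (Fin d) R),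
      ((B * (Matrix.of g)ᵀ).submatrix J id).det = (B.submatrix J id).det * (Matrix.of g)ᵀ.det := by
    intro J B
    rw [← Matrix.det_mul]
    rfl
  obtain ⟨J₀, hJ₀⟩ := exists_minor A' hA'
  rw [hAg, hsub] at hJ₀
  have hg0 := right_ne_zero_of_mul hJ₀
  intro J
  rw [hAg, ← Matrix.mul_assoc, hsub, hsub, ← mul_assoc, abs_mul _ (Matrix.of g)ᵀ.det,
    abs_mul _ (Matrix.of g)ᵀ.det]
  exact mul_lt_mul_of_pos_right (hG J) (abs_pos.2 hg0)

theorem det_minor_expand {n d : ℕ} (K : Matrix (Fin n) (Fin n) R) (A : Matrix (Fin n) (Fin d) R)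
    (r : Fin d → Fin n) :
    ((K * A).submatrix r id).det =
      ∑ f : Fin d → Fin n, (∏ i, K (r i) (f i)) * (A.submatrix f id).det := by
  have h1 : (K * A).submatrix r id = fun i => ∑ l, (K (r i) l) • (A l) := by
    ext i j
    simp [Matrix.mul_apply]
  rw [h1]
  change (Matrix.detRowAlternating : (Fin d → R) [⋀^Fin d]→ₗ[R] R).toMultilinearMap _ = _
  rw [MultilinearMap.map_sum]
  refine Finset.sum_congr rfl fun f _ => ?_
  rw [MultilinearMap.map_smul_univ]
  rfl

theorem jbounded_of_good [LipStrat.IsRealClosed R] {O : Set R}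
    (hO : ∀ (k : ℕ) (x : R), |x| ≤ k → x ∈ O)
    {ε : ℚ} (hε : 0 < ε) {n d : ℕ} {κ : Matrix (Fin n) (Fin n) ℚ} {h : d ≤ n}
    {A : Matrix (Fin n) (Fin d) R} (hG : Good ε κ h A) :
    JBounded O d h (Submodule.map (Matrix.mulVecLin (κ.map (fun q : ℚ => (q : R))))
      (Submodule.span R (Set.range fun j : Fin d => fun i : Fin n => A i j))) := by
  set K := κ.map (fun q : ℚ => (q : R)) with hK
  set B := K * A with hB
  set B1 := B.submatrix (Fin.castLE h) id with hB1
  let ρ : Fin (n - d) → Fin n := fun i => Fin.cast (Nat.add_sub_cancel' h) (Fin.natAdd d i)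
  set B2 := B.submatrix ρ id with hB2
  have hdet : B1.det ≠ 0 := good_det_ne hG
  have hu : IsUnit B1.det := isUnit_iff_ne_zero.2 hdet
  have hε' : (0 : R) < ε := by exact_mod_cast hε
  have hbound : ∀ r : Fin d → Fin n, ∃ k : ℕ, |(B.submatrix r id).det| ≤ k * |B1.det| := by
    intro r
    obtain ⟨k, hk⟩ := exists_nat_ge ((∑ f : Fin d → Fin n, |∏ i, κ (r i) (f i)|) / ε)
    refine ⟨k, ?_⟩
    have hk' : ((∑ f : Fin d → Fin n, |∏ i, K (r i) (f i)|) / (ε : R)) ≤ k := by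
      have : (((∑ f : Fin d → Fin n, |∏ i, κ (r i) (f i)|) / ε : ℚ) : R) ≤ ((k : ℚ) : R) := by
        exact_mod_cast hk
      push_cast at this
      simpa [hK] using this
    refine le_trans ?_ (mul_le_mul_of_nonneg_right hk' (abs_nonneg _))
    rw [hB, det_minor_expand, div_mul_eq_mul_div, le_div_iff₀ hε', Finset.sum_mul]
    refine le_trans (mul_le_mul_of_nonneg_right (Finset.abs_sum_le_sum_abs _ _) hε'.le) ?_
    rw [Finset.sum_mul]
    refine Finset.sum_le_sum fun f _ => ?_
    rw [abs_mul, mul_assoc]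
    refine mul_le_mul_of_nonneg_left ?_ (abs_nonneg _)
    have := (hG f).le
    rw [abs_mul, abs_of_pos hε', mul_comm] at this
    exact this
  refine ⟨B2 * B1⁻¹, fun i j => ?_, ?_⟩
  · have hentry : (B2 * B1⁻¹) i j =
        (B.submatrix (Function.update (Fin.castLE h) j (ρ i)) id).det / B1.det := by
      have h1 : B.submatrix (Function.update (Fin.castLE h) j (ρ i)) id
          = B1.updateRow j (B2 i) := by
        ext a b
        by_cases ha : a = j
        · subst ha; simp [hB2]
        · simp [ha, hB1]
      rw [h1, ← Matrix.cramer_transpose_apply, Matrix.cramer_eq_adjugate_mulVec,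
        Matrix.inv_def, ← Matrix.adjugate_transpose, Matrix.mul_smul, Matrix.smul_apply,
        smul_eq_mul, Ring.inverse_eq_inv', div_eq_inv_mul]
      congr 1
      rw [Matrix.mulVec_transpose]
      rfl
    obtain ⟨k, hk⟩ := hbound (Function.update (Fin.castLE h) j (ρ i))
    refine hO k _ ?_
    rw [hentry, abs_div]
    exact (div_le_iff₀ (abs_pos.2 hdet)).2 hk
  · have hle : ∀ c, prle d h (B *ᵥ c) = B1 *ᵥ c := fun c => rfl
    have hgt : ∀ c, prgt d h (B *ᵥ c) = B2 *ᵥ c := fun c => rfl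
    have hsplit : ∀ x y : Fin n → R, prle d h x = prle d h y → prgt d h x = prgt d h y → x = y := by
      intro x y h1 h2
      ext i
      by_cases hi : (i : ℕ) < d
      · exact congrFun h1 ⟨i, hi⟩
      · have := congrFun h2 ⟨i - d, by omega⟩
        have he : (Fin.cast (Nat.add_sub_cancel' h) (Fin.natAdd d ⟨i - d, by omega⟩) : Fin n) = i := by
          ext; simp; omega
        simpa only [prgt, he] using this
    ext x
    simp only [SetLike.mem_coe, Submodule.mem_map, mem_span_cols, Set.mem_ofPred_eq]
    constructor
    · rintro ⟨_, ⟨c, rfl⟩, rfl⟩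
      rw [Matrix.mulVecLin_apply, Matrix.mulVec_mulVec, ← hB, hle, hgt, Matrix.mulVec_mulVec,
        Matrix.mul_assoc, Matrix.nonsing_inv_mul _ hu, Matrix.mul_one]
    · intro hx
      refine ⟨A *ᵥ (B1⁻¹ *ᵥ prle d h x), ⟨_, rfl⟩, ?_⟩
      rw [Matrix.mulVecLin_apply, Matrix.mulVec_mulVec, ← hB]
      apply hsplit
      · rw [hle, Matrix.mulVec_mulVec, Matrix.mul_nonsing_inv _ hu, Matrix.one_mulVec]
      · rw [hgt, hx, Matrix.mulVec_mulVec]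

theorem def_good (L : FirstOrder.Language) [L.Structure R]
    (hring : ExpandsOrderedRing (R := R) L) (ε : ℚ) {n d : ℕ} (κ : Matrix (Fin n) (Fin n) ℚ)
    (h : d ≤ n) :
    (∅ : Set R).Definable L
      {v : Fin n × Fin d → R | Good ε κ h (Matrix.of fun i j => v (i, j))} := by
  have : {v : Fin n × Fin d → R | Good ε κ h (Matrix.of fun i j => v (i, j))} =
      ⋂ J : Fin d → Fin n, {v : Fin n × Fin d → R |
        ((ε : R) * ((Matrix.of fun i j => v (i, j)).submatrix J id).det) *
          ((ε : R) * ((Matrix.of fun i j => v (i, j)).submatrix J id).det) <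
        ((κ.map (fun q : ℚ => (q : R)) * (Matrix.of fun i j => v (i, j))).submatrix
          (Fin.castLE h) id).det *
        ((κ.map (fun q : ℚ => (q : R)) * (Matrix.of fun i j => v (i, j))).submatrix
          (Fin.castLE h) id).det} := by
    ext v
    simp only [Good, Set.mem_iInter, Set.mem_ofPred_eq, ← sq_lt_sq, sq]
  rw [this]
  refine Set.definable_iInter_of_finite fun J => ?_
  have h1 : (∅ : Set R).DefinableFun L (fun v : Fin n × Fin d → R =>
      (ε : R) * ((Matrix.of fun i j => v (i, j)).submatrix J id).det) := by
    refine def_mul hring (def_rat hring ε) (def_det hring ?_)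
    intro i j
    exact L.definableFun_var _
  have h2 : (∅ : Set R).DefinableFun L (fun v : Fin n × Fin d → R =>
      ((κ.map (fun q : ℚ => (q : R)) * (Matrix.of fun i j => v (i, j))).submatrix
          (Fin.castLE h) id).det) := by
    refine def_det hring ?_
    intro i j
    simp only [Matrix.submatrix_apply, Matrix.mul_apply, Matrix.map_apply, Matrix.of_apply]
    exact def_sum hring _ fun l => def_mul hring (def_rat hring _) (L.definableFun_var _)
  exact def_lt hring (def_mul hring h1 h1) (def_mul hring h2 h2)

theorem open_good [TopologicalSpace R] [OrderTopology R] (ε : ℚ) {n d : ℕ}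
    (κ : Matrix (Fin n) (Fin n) ℚ) (h : d ≤ n) :
    IsOpen {v : Fin n × Fin d → R | Good ε κ h (Matrix.of fun i j => v (i, j))} := by
  have : {v : Fin n × Fin d → R | Good ε κ h (Matrix.of fun i j => v (i, j))} =
      ⋂ J : Fin d → Fin n, {v : Fin n × Fin d → R |
        |(ε : R) * ((Matrix.of fun i j => v (i, j)).submatrix J id).det| <
        |((κ.map (fun q : ℚ => (q : R)) * (Matrix.of fun i j => v (i, j))).submatrix
          (Fin.castLE h) id).det|} := by
    ext v
    simp only [Good, Set.mem_iInter, Set.mem_ofPred_eq]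
  rw [this]
  refine isOpen_iInter_of_finite fun J => ?_
  have hc : Continuous (fun v : Fin n × Fin d → R => (Matrix.of fun i j => v (i, j) :
      Matrix (Fin n) (Fin d) R)) := by
    refine continuous_matrix fun i j => ?_
    exact continuous_apply _
  refine isOpen_lt ?_ ?_
  · exact (continuous_const.mul (hc.matrix_submatrix _ _).matrix_det).abs
  · exact ((continuous_const.matrix_mul hc).matrix_submatrix _ _).matrix_det.abs

end Graph

end GC

open LipStrat in
/-- Lemma 3.8, coverings of the Grassmannians. For fixed `n` and `ℓ`
there are finite open `L`-definable coverings `(Θ_ν^d)_ν` of the Grassmannians `Gr_{n,d}(R)`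
(`d ≤ n`) such that for any `ℓ` of these sets there is a rational orthogonal matrix
`κ ∈ O_n(ℚ)` with `v(J(κ V)) ≥ 0` for every `V` in each of the chosen sets. -/
theorem grassmannian_covering
    {R : Type*} [Field R] [LinearOrder R] [IsStrictOrderedRing R] [LipStrat.IsRealClosed R]
    [TopologicalSpace R] [OrderTopology R]
    (L : FirstOrder.Language) [L.Structure R]
    (hring : ExpandsOrderedRing (R := R) L)
    (homin : IsOMinimal (R := R) L)
    (hpb : IsPowerBounded (R := R) L)
    (R₀ : L.ElementarySubstructure R) (hproper : (R₀ : Set R) ≠ Set.univ)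
    (O : Set R) (hO : O = convexClosure (R₀ : Set R))
    (n ℓ : ℕ) :
    ∃ (K : ℕ → ℕ) (Θ : (d : ℕ) → Fin (K d) → Set (Submodule R (Fin n → R))),
      -- each `Θ_ν^d` is an open `L`-definable set of `d`-dimensional subspaces
      (∀ d : ℕ, d ≤ n → ∀ ν : Fin (K d),
        (∀ W ∈ Θ d ν, Module.finrank R W = d) ∧
        IsOpen (grassRep (Θ d ν) : Set ((Fin n × Fin d) → R)) ∧
        Set.Definable (∅ : Set R) L (grassRep (Θ d ν) : Set ((Fin n × Fin d) → R))) ∧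
      -- the `Θ_ν^d` cover `Gr_{n,d}(R)`
      (∀ d : ℕ, d ≤ n → ∀ W : Submodule R (Fin n → R), Module.finrank R W = d →
        ∃ ν : Fin (K d), W ∈ Θ d ν) ∧
      -- common rational orthogonal transformation for any `ℓ` choices
      (∀ (dd : Fin ℓ → ℕ) (hdd : ∀ i, dd i ≤ n) (νν : (i : Fin ℓ) → Fin (K (dd i))),
        ∃ κ : Matrix (Fin n) (Fin n) ℚ, κ * κ.transpose = 1 ∧ κ.transpose * κ = 1 ∧
          ∀ i : Fin ℓ, ∀ W ∈ Θ (dd i) (νν i),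
            JBounded O (dd i) (hdd i)
              (Submodule.map (Matrix.mulVecLin (κ.map (fun q : ℚ => (q : R)))) W)) := by
  obtain ⟨N, m, F, ε, hε, hN, hF, hbad⟩ := GC.core R n ℓ
  let I := {S : Finset (Fin N) // N ≤ S.card + m}
  let e : I ≃ Fin (Fintype.card I) := Fintype.equivFin I
  let Θ : (d : ℕ) → Fin (Fintype.card I) → Set (Submodule R (Fin n → R)) := fun d ν =>
    {W | ∃ (h : d ≤ n) (A : Matrix (Fin n) (Fin d) R),
      (∀ k ∈ (e.symm ν).1, GC.Good ε (F k) h A) ∧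
      Submodule.span R (Set.range fun j : Fin d => fun i : Fin n => A i j) = W}
  have hne : ∀ ν, ∃ k, k ∈ (e.symm ν).1 := fun ν => by
    have h1 := (e.symm ν).2
    have h2 : m ≤ m * (ℓ + 1) := Nat.le_mul_of_pos_right _ (Nat.succ_pos _)
    have h3 : 0 < (e.symm ν).1.card := by omega
    exact Finset.card_pos.1 h3
  have hrep : ∀ d (h : d ≤ n) ν, (grassRep (Θ d ν) : Set ((Fin n × Fin d) → R)) =
      ⋂ k ∈ (e.symm ν).1, {v | GC.Good ε (F k) h (Matrix.of fun i j => v (i, j))} := by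
    intro d h ν
    ext v
    simp only [grassRep, Θ, Set.mem_iInter, Set.mem_ofPred_eq]
    constructor
    · rintro ⟨hli, _, A, hA, hsp⟩ k hk
      exact GC.good_of_span_eq (hA k hk) hli hsp.symm
    · intro hv
      obtain ⟨k, hk⟩ := hne ν
      exact ⟨GC.good_li (hv k hk), h, _, hv, rfl⟩
  refine ⟨fun _ => Fintype.card I, Θ, ?_, ?_, ?_⟩
  · intro d h ν
    refine ⟨?_, ?_, ?_⟩
    · rintro W ⟨_, A, hA, rfl⟩
      obtain ⟨k, hk⟩ := hne ν
      rw [finrank_span_eq_card (GC.good_li (hA k hk)), Fintype.card_fin]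
    · rw [hrep d h ν]
      exact isOpen_biInter_finset fun k _ => GC.open_good ε (F k) h
    · rw [hrep d h ν]
      exact Set.definable_biInter_finset (fun k => GC.def_good L hring ε (F k) h) _
  · intro d h W hW
    let b : Module.Basis (Fin d) R W := Module.finBasisOfFinrankEq R W hW
    let A : Matrix (Fin n) (Fin d) R := Matrix.of fun i j => (b j : Fin n → R) i
    have hli : LinearIndependent R (fun j : Fin d => fun i : Fin n => A i j) :=
      b.linearIndependent.map' W.subtype W.ker_subtype
    have hsp : Submodule.span R (Set.range fun j : Fin d => fun i : Fin n => A i j) = W := by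
      have h1 : (Set.range fun j : Fin d => fun i : Fin n => A i j) = W.subtype '' Set.range b := by
        rw [← Set.range_comp]
        rfl
      rw [h1, ← Submodule.map_span, b.span_eq, Submodule.map_top, Submodule.range_subtype]
    have hc := hbad d h A hli
    have hsum := Finset.card_filter_add_card_filter_not (s := (Finset.univ : Finset (Fin N)))
      (fun k => GC.Good ε (F k) h A)
    rw [Finset.card_univ, Fintype.card_fin] at hsum
    refine ⟨e ⟨Finset.univ.filter fun k => GC.Good ε (F k) h A, by omega⟩, h, A, ?_, hsp⟩
    intro k hk
    rw [Equiv.symm_apply_apply] at hk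
    exact (Finset.mem_filter.1 hk).2
  · intro dd hdd νν
    have hex : ∃ k : Fin N, ∀ i, k ∈ (e.symm (νν i)).1 := by
      by_contra hcon
      push Not at hcon
      have hsub : (Finset.univ : Finset (Fin N)) ⊆
          Finset.univ.biUnion fun i : Fin ℓ => (e.symm (νν i)).1ᶜ := by
        intro k _
        obtain ⟨i, hi⟩ := hcon k
        exact Finset.mem_biUnion.2 ⟨i, Finset.mem_univ _, Finset.mem_compl.2 hi⟩
      have h1 := Finset.card_le_card hsub
      have h2 := Finset.card_biUnion_le_card_mul (Finset.univ : Finset (Fin ℓ))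
        (fun i : Fin ℓ => (e.symm (νν i)).1ᶜ) m (fun i _ => by
          have := (e.symm (νν i)).2
          rw [Finset.card_compl, Fintype.card_fin]
          omega)
      rw [Finset.card_univ, Fintype.card_fin] at h1 h2
      have h3 : ℓ * m ≤ m * (ℓ + 1) := by
        rw [Nat.mul_comm]
        exact Nat.mul_le_mul_left _ (Nat.le_succ _)
      omega
    obtain ⟨k, hk⟩ := hex
    refine ⟨F k, (hF k).1, (hF k).2, ?_⟩
    rintro i W ⟨_, A, hA, rfl⟩
    refine GC.jbounded_of_good (fun k x hx => ?_) hε (hA k (hk i))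
    rw [hO]
    exact GC.nat_mem_O hring R₀ k x hx
end
end
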